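/- (Minimax lower bound for estimating the likelihood ratio.) For every α ∈ (0,1) and every 0 < β < α/2 there exists a constant C(α,β), depending only on (α,β), such that for every n ≥ max(4, (12α)^{1/(1−α)}), every 0 < C ≤ 1/(64π Γ(1−α)), every C' > C(α,β), every measurable estimator T̂ : ℕ^n → ℝ, and every measurable h : ℝ → ℝ, one has sup over P ∈ Σ(α,β,C,C') of P_P( √(n^α L_α(P)) · ℓ(T̂(X_n), T(P;X_n)) > √C · min( 1/(8√(6α)), n^{α/2}/2 ) ) ≥ 1/4. -/

import Mathlib

open MeasureTheory ProbabilityTheory Real Filter ENNReal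

noncomputable section

/-- The law of an i.i.d. sample of size `n` from the discrete distribution `P` on `ℕ`. -/
def sampleMeasure (P : PMF ℕ) (n : ℕ) : Measure (Fin n → ℕ) :=
  Measure.pi fun _ => P.toMeasure

/-- The probability mass of symbol `j` under `P`, as a real number. -/
def pReal (P : PMF ℕ) (j : ℕ) : ℝ := (P j).toReal

/-- Empirical frequency of the symbol `j` in the sample `ω`. -/
def freq {n : ℕ} (ω : Fin n → ℕ) (j : ℕ) : ℕ :=
  (Finset.univ.filter fun i => ω i = j).card

/-- The `r`-order missing mass `θ_r(P; X_n)`. -/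
def missingMass (p : ℕ → ℝ) (r : ℕ) {n : ℕ} (ω : Fin n → ℕ) : ℝ :=
  ∑' j, p j ^ r * (if freq ω j = 0 then 1 else 0)

/-- `M_{n,r}`: the number of distinct symbols appearing exactly `r` times in the sample. -/
def Mcount {n : ℕ} (ω : Fin n → ℕ) (r : ℕ) : ℝ :=
  ∑' j, if freq ω j = r then 1 else 0

/-- The Good–Turing-type estimator `θ̂_r^{GT}(X_n) = M_{n,r} / (n choose r)`. -/
def gtEst {n : ℕ} (ω : Fin n → ℕ) (r : ℕ) : ℝ := Mcount ω r / (n.choose r)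

/-- The multiplicative (relative) loss: `ℓ(t, θ) = |t/θ - 1|` if `θ > 0`, and `h t` otherwise. -/
def mloss (h : ℝ → ℝ) (t θ : ℝ) : ℝ := if 0 < θ then |t / θ - 1| else h t

/-- The tail function `F̄_P(x) = #{j : p_j > x}`. -/
def tailF (P : PMF ℕ) (x : ℝ) : ℕ := Set.ncard {j | x < pReal P j}

/-- `P ∈ Σ(α,β,C,C')` with `Lα = L_α(P) = lim_{x→0} x^α F̄_P(x)`. -/
def inSigmaClass (α β C C' : ℝ) (P : PMF ℕ) (Lα : ℝ) : Prop :=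
  Tendsto (fun x => x ^ α * (tailF P x : ℝ)) (nhdsWithin 0 (Set.Ioi 0)) (nhds Lα) ∧
  C ≤ Lα ∧
  ∀ x ∈ Set.Ioo (0 : ℝ) 1,
    x ^ (-β) * |(tailF P x : ℝ) / (Lα * x ^ (-α)) - 1| ≤ C'

/-- The likelihood ratio `T(P;X_n) = θ_1(P;X_n) / θ_2(P;X_n)` of the rare-type match problem. -/
def likelihoodRatio (p : ℕ → ℝ) {n : ℕ} (ω : Fin n → ℕ) : ℝ :=
  missingMass p 1 ω / missingMass p 2 ω


/-! ### Elementary inequalities -/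

lemma aux_tangent {r t : ℝ} (ht : 0 < t) (hr : r ≤ 0 ∨ 1 ≤ r) : 1 + r * (t - 1) ≤ t ^ r := by
  rcases hr with hr | hr
  · have h1 : Real.log t ≤ t - 1 := Real.log_le_sub_one_of_pos ht
    have h2 : r * Real.log t + 1 ≤ Real.exp (r * Real.log t) := Real.add_one_le_exp _
    rw [Real.rpow_def_of_pos ht, mul_comm (Real.log t)]
    nlinarith
  · have := one_add_mul_self_le_rpow_one_add (s := t - 1) (by linarith) hr
    simpa using this

/-- Tangent line inequality for power functions. -/
lemma aux_tangent' {r x y : ℝ} (hx : 0 < x) (hy : 0 < y) (hr : r ≤ 0 ∨ 1 ≤ r) :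
    x ^ r + r * x ^ (r - 1) * (y - x) ≤ y ^ r := by
  have h := aux_tangent (t := y / x) (by positivity) hr
  rw [Real.div_rpow hy.le hx.le] at h
  have hxr : 0 < x ^ r := Real.rpow_pos_of_pos hx r
  rw [le_div_iff₀ hxr] at h
  rw [Real.rpow_sub hx, Real.rpow_one]
  refine le_trans (le_of_eq ?_) h
  field_simp

lemma aux_sum_pow_le {c : ℝ} (hc : 0 ≤ c) (J : ℕ) :
    ∑ j ∈ Finset.range J, (j : ℝ) ^ c ≤ ((J : ℝ) ^ (c + 1) + 1) / (c + 1) := by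
  have hc1 : 0 < c + 1 := by linarith
  rw [le_div_iff₀ hc1]
  induction J with
  | zero => simp [Real.zero_rpow hc1.ne']
  | succ k ih =>
    rw [Finset.sum_range_succ, add_mul]
    rcases Nat.eq_zero_or_pos k with rfl | hk
    · rcases hc.eq_or_lt with rfl | h
      · norm_num
      · simp [Real.zero_rpow h.ne']
    · have hk' : (0 : ℝ) < k := by exact_mod_cast hk
      have := aux_tangent' (r := c + 1) (x := k) (y := k + 1) hk' (by linarith) (Or.inr (by linarith))
      push_cast
      simp only [add_sub_cancel_right, add_sub_cancel_left] at this
      nlinarith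

lemma aux_tail_upper {a : ℝ} (ha : 1 < a) {J : ℕ} (hJ : 1 ≤ J) :
    ∑' i : ℕ, ((i + J : ℕ) : ℝ) ^ (-a) ≤ (J : ℝ) ^ (-a) + (J : ℝ) ^ (1 - a) / (a - 1) := by
  have ha1 : 0 < a - 1 := by linarith
  have key : ∀ N : ℕ, ∑ i ∈ Finset.range N, ((i + 1 + J : ℕ) : ℝ) ^ (-a) ≤
      ((J : ℝ) ^ (1 - a) - ((N + J : ℕ) : ℝ) ^ (1 - a)) / (a - 1) := by
    intro N
    induction N with
    | zero => simp
    | succ k ih =>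
      rw [Finset.sum_range_succ]
      rw [le_div_iff₀ ha1] at ih ⊢
      have hx : (0 : ℝ) < ((k + 1 + J : ℕ) : ℝ) := by positivity
      have hy : (0 : ℝ) < ((k + J : ℕ) : ℝ) := by
        have : 0 < k + J := by omega
        exact_mod_cast this
      have := aux_tangent' (r := 1 - a) hx hy (Or.inl (by linarith))
      have e1 : ((k + J : ℕ) : ℝ) - ((k + 1 + J : ℕ) : ℝ) = -1 := by push_cast; ring
      have e2 : 1 - a - 1 = -a := by ring
      rw [e1, e2] at this
      nlinarith
  refine Real.tsum_le_of_sum_range_le (fun n => by positivity) ?_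
  intro N
  cases N with
  | zero => simp; positivity
  | succ k =>
    rw [Finset.sum_range_succ']
    have h1 := key k
    have h2 : ((J : ℝ) ^ (1 - a) - ((k + J : ℕ) : ℝ) ^ (1 - a)) / (a - 1) ≤
        (J : ℝ) ^ (1 - a) / (a - 1) := by
      gcongr
      have : (0 : ℝ) ≤ ((k + J : ℕ) : ℝ) ^ (1 - a) := by positivity
      linarith
    simp only [zero_add]
    linarith

lemma aux_summable {a : ℝ} (ha : 1 < a) (J : ℕ) :
    Summable fun i : ℕ => ((i + J : ℕ) : ℝ) ^ (-a) := by
  have : Summable fun i : ℕ => (i : ℝ) ^ (-a) := Real.summable_nat_rpow.2 (by linarith)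
  exact (summable_nat_add_iff J).2 this

lemma aux_tail_lower {a : ℝ} (ha : 1 < a) {J : ℕ} (hJ : 1 ≤ J) :
    (J : ℝ) ^ (1 - a) / (a - 1) ≤ ∑' i : ℕ, ((i + J : ℕ) : ℝ) ^ (-a) := by
  have ha1 : 0 < a - 1 := by linarith
  have key : ∀ N : ℕ, ((J : ℝ) ^ (1 - a) - ((N + J : ℕ) : ℝ) ^ (1 - a)) / (a - 1) ≤
      ∑ i ∈ Finset.range N, ((i + J : ℕ) : ℝ) ^ (-a) := by
    intro N
    induction N with
    | zero => simp
    | succ k ih =>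
      rw [Finset.sum_range_succ]
      rw [div_le_iff₀ ha1] at ih ⊢
      have hx : (0 : ℝ) < ((k + 1 + J : ℕ) : ℝ) := by positivity
      have hy : (0 : ℝ) < ((k + J : ℕ) : ℝ) := by
        have : 0 < k + J := by omega
        exact_mod_cast this
      have := aux_tangent' (r := 1 - a) hy hx (Or.inl (by linarith))
      have e1 : ((k + 1 + J : ℕ) : ℝ) - ((k + J : ℕ) : ℝ) = 1 := by push_cast; ring
      have e2 : 1 - a - 1 = -a := by ring
      rw [e1, e2] at this
      nlinarith
  have lim : Tendsto (fun N : ℕ => ((J : ℝ) ^ (1 - a) - ((N + J : ℕ) : ℝ) ^ (1 - a)) / (a - 1))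
      atTop (nhds (((J : ℝ) ^ (1 - a) - 0) / (a - 1))) := by
    refine Tendsto.div_const (Tendsto.sub tendsto_const_nhds ?_) _
    have h1 : Tendsto (fun x : ℝ => x ^ (-(a - 1))) atTop (nhds 0) := tendsto_rpow_neg_atTop ha1
    have h2 : Tendsto (fun N : ℕ => ((N + J : ℕ) : ℝ)) atTop atTop :=
      tendsto_natCast_atTop_atTop.comp (tendsto_add_atTop_nat J)
    have := h1.comp h2
    simpa [Function.comp_def] using this
  rw [sub_zero] at lim
  refine le_of_tendsto lim (Eventually.of_forall fun N => (key N).trans ?_)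
  exact (aux_summable ha J).sum_le_tsum _ (fun i _ => by positivity)

lemma aux_Gamma_lower {α : ℝ} (hα : α ∈ Set.Ioo (0 : ℝ) 1) :
    1 / (2 * (1 - α)) ≤ Real.Gamma (1 - α) := by
  obtain ⟨h0, h1⟩ := hα
  have hG : Real.Gamma (2 - α) = (1 - α) * Real.Gamma (1 - α) := by
    have := Real.Gamma_add_one (s := 1 - α) (by linarith)
    rw [← this]; congr 1; ring
  have hc := Real.convexOn_log_Gamma
  have g2 : Real.Gamma 2 = 1 := by simp
  have g3 : Real.Gamma 3 = 2 := by simp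
  have i1 : (Real.log ∘ Real.Gamma) ((1 - α) • (2 : ℝ) + α • (3 : ℝ)) ≤
      (1 - α) • (Real.log ∘ Real.Gamma) 2 + α • (Real.log ∘ Real.Gamma) 3 :=
    hc.2 (by simp) (by simp) (by linarith) h0.le (by ring)
  have i2 : (Real.log ∘ Real.Gamma) ((1 / 2 : ℝ) • (2 - α) + (1 / 2 : ℝ) • (2 + α)) ≤
      (1 / 2 : ℝ) • (Real.log ∘ Real.Gamma) (2 - α) +
        (1 / 2 : ℝ) • (Real.log ∘ Real.Gamma) (2 + α) :=
    hc.2 (by simp; linarith) (by simp; linarith) (by norm_num) (by norm_num) (by norm_num)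
  have e1 : (1 - α) * 2 + α * 3 = 2 + α := by ring
  have e2 : 1 / 2 * (2 - α) + 1 / 2 * (2 + α) = 2 := by ring
  simp only [smul_eq_mul, Function.comp_apply, e1, e2, g2, g3, Real.log_one] at i1 i2
  have hl2 : 0 < Real.log 2 := Real.log_pos (by norm_num)
  have i3 : -Real.log 2 ≤ Real.log (Real.Gamma (2 - α)) := by nlinarith
  have hpos : 0 < Real.Gamma (2 - α) := Real.Gamma_pos_of_pos (by linarith)
  have i4 : 1 / 2 ≤ Real.Gamma (2 - α) := by
    rw [← Real.log_inv] at i3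
    have := (Real.log_le_log_iff (by norm_num) hpos).1 i3
    simpa using this
  rw [hG] at i4
  rw [div_le_iff₀ (by linarith)]
  linarith

/-! ### The family of distributions -/

/-- The power tail sequence, started at the index `J`. -/
def tw (a : ℝ) (J : ℕ) (j : ℕ) : ℝ := if J ≤ j then (j : ℝ) ^ (-a) else 0

/-- The mass of the power tail. -/
def tailM (a : ℝ) (J : ℕ) : ℝ := ∑' j, tw a J j

/-- The family of probability mass functions used in the lower bound. -/
def fam (a : ℝ) (m J : ℕ) (δ : ℝ) (j : ℕ) : ℝ :=
  (if j = 0 then 1 - (tailM a m + δ * tailM a J) else 0) + (tw a m j + δ * tw a J j)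

lemma tw_nonneg (a : ℝ) (J j : ℕ) : 0 ≤ tw a J j := by
  unfold tw; split_ifs <;> positivity

lemma tw_summable {a : ℝ} (ha : 1 < a) (J : ℕ) : Summable (tw a J) := by
  have : Summable fun i : ℕ => (i : ℝ) ^ (-a) := Real.summable_nat_rpow.2 (by linarith)
  refine Summable.of_nonneg_of_le (tw_nonneg a J) (fun j => ?_) this
  unfold tw; split_ifs
  · exact le_rfl
  · positivity

lemma tailM_nonneg (a : ℝ) (J : ℕ) : 0 ≤ tailM a J := tsum_nonneg (tw_nonneg a J)

lemma tailM_eq {a : ℝ} (ha : 1 < a) (J : ℕ) :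
    tailM a J = ∑' i : ℕ, ((i + J : ℕ) : ℝ) ^ (-a) := by
  unfold tailM
  rw [← (tw_summable ha J).sum_add_tsum_nat_add J, Finset.sum_eq_zero, zero_add]
  · refine tsum_congr fun i => ?_
    simp [tw]
  · intro i hi
    have := Finset.mem_range.1 hi
    simp [tw, this]

lemma tailM_tendsto {a : ℝ} (ha : 1 < a) : Tendsto (fun J => tailM a J) atTop (nhds 0) := by
  have := tendsto_sum_nat_add (fun i : ℕ => (i : ℝ) ^ (-a))
  simpa only [tailM_eq ha] using this

lemma tailM_mono {a : ℝ} (ha : 1 < a) {m J : ℕ} (h : m ≤ J) : tailM a J ≤ tailM a m := by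
  refine (tw_summable ha J).tsum_le_tsum (fun j => ?_) (tw_summable ha m)
  unfold tw
  split_ifs with h1 h2
  · exact le_rfl
  · omega
  · positivity
  · exact le_rfl

lemma tailM_pos {a : ℝ} (ha : 1 < a) {J : ℕ} (hJ : 1 ≤ J) : 0 < tailM a J := by
  have h : tw a J J ≤ tailM a J :=
    (tw_summable ha J).le_tsum J (fun j _ => tw_nonneg a J j)
  have : 0 < tw a J J := by
    simp only [tw, le_refl, if_true]
    have : (0 : ℝ) < J := by exact_mod_cast hJ
    positivity
  linarith

lemma fam_hasSum {a : ℝ} (ha : 1 < a) (m J : ℕ) (δ : ℝ) : HasSum (fam a m J δ) 1 := by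
  have h1 := (tw_summable ha m).hasSum
  have h2 := (tw_summable ha J).hasSum.mul_left δ
  have h3 := hasSum_ite_eq (0 : ℕ) (1 - (tailM a m + δ * tailM a J))
  have := h3.add (h1.add h2)
  have e : 1 - (tailM a m + δ * tailM a J) + (∑' b, tw a m b + δ * ∑' b, tw a J b) = 1 := by
    unfold tailM; ring
  rw [e] at this
  exact this

lemma fam_nonneg {a : ℝ} {m J : ℕ} {δ : ℝ} (hδ : 0 ≤ δ)
    (h : tailM a m + δ * tailM a J ≤ 1) (j : ℕ) : 0 ≤ fam a m J δ j := by
  unfold fam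
  have h1 := tw_nonneg a m j
  have h2 := mul_nonneg hδ (tw_nonneg a J j)
  split_ifs <;> linarith

lemma fam_exists {a : ℝ} (ha : 1 < a) {m J : ℕ} {δ : ℝ} (hδ : 0 ≤ δ)
    (h : tailM a m + δ * tailM a J ≤ 1) :
    ∃ P : PMF ℕ, (∀ j, P j = ENNReal.ofReal (fam a m J δ j)) ∧
      ∀ j, pReal P j = fam a m J δ j := by
  have hs := fam_hasSum ha m J δ
  have hn := fam_nonneg hδ h
  have key : HasSum (fun j => ENNReal.ofReal (fam a m J δ j)) 1 := by
    rw [ENNReal.summable.hasSum_iff, ← ENNReal.ofReal_tsum_of_nonneg hn hs.summable, hs.tsum_eq]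
    simp
  refine ⟨⟨_, key⟩, fun j => rfl, fun j => ?_⟩
  change (ENNReal.ofReal (fam a m J δ j)).toReal = _
  exact ENNReal.toReal_ofReal (hn j)

lemma fam_zero {a : ℝ} {m J : ℕ} (hm : 1 ≤ m) (hJ : 1 ≤ J) (δ : ℝ) :
    fam a m J δ 0 = 1 - (tailM a m + δ * tailM a J) := by
  have h1 : m ≠ 0 := by omega
  have h2 : J ≠ 0 := by omega
  simp [fam, tw, h1, h2]

/-- Membership of the family in the second-order regularly varying class. -/
lemma fam_inSigma {α β : ℝ} (hα : α ∈ Set.Ioo (0 : ℝ) 1) (hβ : 0 < β) (hβα : β < α / 2)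
    {m J : ℕ} (hm : 1 ≤ m) {δ K C C' : ℝ} (hδ : 0 ≤ δ)
    (hK : δ * Real.sqrt J ≤ K) (hC : C ≤ 1) (hC' : (m : ℝ) + 1 + K ≤ C')
    {P : PMF ℕ} (hP : ∀ j, pReal P j = fam (1 / α) m J δ j) :
    inSigmaClass α β C C' P ((1 + δ) ^ α) := by
  obtain ⟨hα0, hα1⟩ := hα
  have hL : 1 ≤ (1 + δ) ^ α := Real.one_le_rpow (by linarith) hα0.le
  set L := (1 + δ) ^ α with hLdef
  have hL1 : L ≤ 1 + δ := by
    calc L ≤ (1 + δ) ^ (1 : ℝ) := Real.rpow_le_rpow_of_exponent_le (by linarith) hα1.le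
      _ = 1 + δ := Real.rpow_one _
  have hpow : ∀ j : ℕ, 1 ≤ j → ∀ x c : ℝ, 0 < x → 0 < c →
      (x < c * (j : ℝ) ^ (-(1 / α)) ↔ (j : ℝ) < c ^ α * x ^ (-α)) := by
    intro j hj x c hx hc
    have hj0 : (0 : ℝ) < j := by exact_mod_cast hj
    have hR : 0 < c * (j : ℝ) ^ (-(1 / α)) := by positivity
    rw [← Real.rpow_lt_rpow_iff hx.le hR.le hα0, Real.mul_rpow hc.le (by positivity),
      ← Real.rpow_mul hj0.le]
    have : -(1 / α) * α = -1 := by field_simp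
    rw [this, Real.rpow_neg_one, Real.rpow_neg hx.le, ← div_eq_mul_inv, ← div_eq_mul_inv,
      lt_div_iff₀ hj0, lt_div_iff₀ (by positivity), mul_comm]
  have main : ∀ x ∈ Set.Ioo (0 : ℝ) 1,
      x ^ (-β) * |(tailF P x : ℝ) / (L * x ^ (-α)) - 1| ≤ C' := by
    rintro x ⟨hx0, hx1⟩
    set y := x ^ (-α) with hy
    have hy1 : 1 ≤ y := Real.one_le_rpow_of_pos_of_le_one_of_nonpos hx0 hx1.le (by linarith)
    have hxb : x ^ (-β) ≤ Real.sqrt y := by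
      rw [Real.sqrt_eq_rpow, hy, ← Real.rpow_mul hx0.le]
      exact Real.rpow_le_rpow_of_exponent_ge hx0 hx1.le (by linarith)
    have hxb0 : 0 < x ^ (-β) := by positivity
    have hsq : Real.sqrt y ≤ y := by
      rw [Real.sqrt_le_left (by linarith)]; nlinarith
    have hsub : {j | x < pReal P j} ⊆ (Finset.range ⌈L * y⌉₊ : Set ℕ) := by
      intro j hj
      simp only [Set.mem_ofPred_eq, hP] at hj
      simp only [Finset.coe_range, Set.mem_Iio, Nat.lt_ceil]
      rcases Nat.eq_zero_or_pos j with rfl | hj0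
      · simp only [Nat.cast_zero]; positivity
      · refine (hpow j hj0 x (1 + δ) hx0 (by linarith)).1 (hj.trans_le ?_)
        have : (0 : ℝ) ≤ (j : ℝ) ^ (-(1 / α)) := by positivity
        have h3 := mul_nonneg hδ this
        simp only [fam, tw, hj0.ne', if_false]
        split_ifs <;> linarith
    have hfin : {j | x < pReal P j}.Finite := (Finset.finite_toSet _).subset hsub
    have hup : (tailF P x : ℝ) ≤ L * y + 1 := by
      have h1 : tailF P x ≤ ⌈L * y⌉₊ := by
        have := Set.ncard_le_ncard hsub (Finset.finite_toSet _)
        rwa [Set.ncard_coe_finset, Finset.card_range] at this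
      have h2 := Nat.ceil_lt_add_one (a := L * y) (by positivity)
      have h3 : (tailF P x : ℝ) ≤ (⌈L * y⌉₊ : ℝ) := by exact_mod_cast h1
      linarith
    have hlow : ∀ z : ℝ, 0 ≤ z → (∀ j : ℕ, m ≤ j → (j : ℝ) < z → x < pReal P j) →
        z - m ≤ tailF P x := by
      intro z hz h
      have hs : (Finset.Ico m ⌈z⌉₊ : Set ℕ) ⊆ {j | x < pReal P j} := by
        intro j hj
        simp only [Finset.coe_Ico, Set.mem_Ico, Nat.lt_ceil] at hj
        exact h j hj.1 hj.2
      have h1 := Set.ncard_le_ncard hs hfin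
      rw [Set.ncard_coe_finset, Nat.card_Ico] at h1
      have h2 : (⌈z⌉₊ : ℝ) ≤ tailF P x + m := by
        have : ⌈z⌉₊ ≤ tailF P x + m := by unfold tailF; omega
        exact_mod_cast this
      have := Nat.le_ceil z
      linarith
    have hfamlow : ∀ j : ℕ, m ≤ j → (j : ℝ) < y → x < pReal P j := by
      intro j hj hjy
      have h := (hpow j (by omega) x 1 hx0 one_pos).2 (by simpa using hjy)
      rw [hP]
      have h0 : j ≠ 0 := by omega
      have h2 := mul_nonneg hδ (tw_nonneg (1 / α) J j)
      simp only [fam, h0, if_false]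
      simp only [tw, hj, if_true] at h2 ⊢
      linarith
    have habs : x ^ (-β) * |(tailF P x : ℝ) - L * y| ≤ C' * (L * y) := by
      have hLy : y ≤ L * y := by nlinarith
      have hK0 : 0 ≤ K := le_trans (by positivity) hK
      rcases lt_or_ge y J with hyJ | hyJ
      · have h1 := hlow y (by linarith) hfamlow
        have h2 : |(tailF P x : ℝ) - L * y| ≤ (m : ℝ) + 1 + δ * y := by
          have : 0 ≤ δ * y := by positivity
          have hm0 : (0 : ℝ) ≤ m := by positivity
          rw [abs_le]; constructor <;> nlinarith
        have h3 : Real.sqrt y ≤ Real.sqrt J := Real.sqrt_le_sqrt hyJ.le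
        calc x ^ (-β) * |(tailF P x : ℝ) - L * y|
            ≤ Real.sqrt y * ((m : ℝ) + 1 + δ * y) := by gcongr
          _ = Real.sqrt y * ((m : ℝ) + 1) + (δ * Real.sqrt y) * y := by ring
          _ ≤ y * ((m : ℝ) + 1) + K * y := by
              gcongr
              exact le_trans (by gcongr) hK
          _ = ((m : ℝ) + 1 + K) * y := by ring
          _ ≤ C' * (L * y) := by gcongr; linarith [show (0 : ℝ) ≤ m by positivity]
      · have h1 := hlow (L * y) (by positivity) (by
          intro j hj hjy
          by_cases hJj : J ≤ j
          · have h := (hpow j (by omega) x (1 + δ) hx0 (by linarith)).2 hjy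
            have h0 : j ≠ 0 := by omega
            rw [hP]
            simp only [fam, tw, h0, hj, hJj, if_true, if_false]
            linarith
          · refine hfamlow j hj (lt_of_lt_of_le ?_ hyJ)
            exact_mod_cast not_le.1 hJj)
        have h2 : |(tailF P x : ℝ) - L * y| ≤ (m : ℝ) + 1 := by
          have hm0 : (0 : ℝ) ≤ m := by positivity
          rw [abs_le]; constructor <;> linarith
        calc x ^ (-β) * |(tailF P x : ℝ) - L * y|
            ≤ y * ((m : ℝ) + 1) := by gcongr; linarith
          _ ≤ (L * y) * C' := by gcongr; linarith
          _ = C' * (L * y) := mul_comm _ _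
    have hLy0 : 0 < L * y := by positivity
    have : (tailF P x : ℝ) / (L * y) - 1 = ((tailF P x : ℝ) - L * y) / (L * y) := by
      field_simp
    rw [this, abs_div, abs_of_pos hLy0, ← mul_div_assoc, div_le_iff₀ hLy0]
    exact habs
  refine ⟨?_, by linarith, main⟩
  have hxb : Tendsto (fun x : ℝ => L * C' * x ^ β) (nhdsWithin 0 (Set.Ioi 0)) (nhds 0) := by
    have : Tendsto (fun x : ℝ => x ^ β) (nhds 0) (nhds ((0 : ℝ) ^ β)) :=
      (Real.continuousAt_rpow_const 0 β (Or.inr hβ.le)).tendsto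
    rw [Real.zero_rpow hβ.ne'] at this
    simpa using (this.mono_left nhdsWithin_le_nhds).const_mul (L * C')
  rw [tendsto_iff_norm_sub_tendsto_zero]
  refine squeeze_zero' (Eventually.of_forall fun _ => norm_nonneg _) ?_ hxb
  filter_upwards [Ioo_mem_nhdsGT (zero_lt_one' ℝ)] with x hx
  have h := main x hx
  have hx0 := hx.1
  have e : x ^ α * (tailF P x : ℝ) - L = L * ((tailF P x : ℝ) / (L * x ^ (-α)) - 1) := by
    rw [Real.rpow_neg hx0.le]
    have : 0 < x ^ α := by positivity
    field_simp
  rw [Real.norm_eq_abs, e, abs_mul, abs_of_pos (by linarith), mul_assoc]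
  rw [Real.rpow_neg hx0.le, inv_mul_le_iff₀ (by positivity)] at h
  gcongr
  linarith

/-! ### Product measures -/

instance sampleMeasure_prob (P : PMF ℕ) (n : ℕ) : IsProbabilityMeasure (sampleMeasure P n) := by
  unfold sampleMeasure; infer_instance

lemma sampleMeasure_singleton (P : PMF ℕ) (n : ℕ) (ω : Fin n → ℕ) :
    sampleMeasure P n {ω} = ∏ i, P (ω i) := by
  unfold sampleMeasure
  rw [Measure.pi_singleton]
  refine Finset.prod_congr rfl fun i _ => ?_
  exact PMF.toMeasure_apply_singleton P _ (measurableSet_singleton _)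

/-- Total variation bound between product measures through the chi-square divergence. -/
lemma tv_bound {P0 P1 : PMF ℕ} {r : ℕ → ℝ} (hr0 : ∀ j, 0 ≤ r j) (hr2 : ∀ j, r j ≤ 2)
    (hP : ∀ j, P1 j = ENNReal.ofReal (r j) * P0 j) {n : ℕ} {χ : ℝ}
    (hχ : ∫ j, r j ^ 2 ∂P0.toMeasure = 1 + χ) (hn : (1 + χ) ^ n ≤ 5 / 4)
    (A : Set (Fin n → ℕ)) :
    sampleMeasure P0 n A ≤ sampleMeasure P1 n A + 1 / 4 := by
  set μ0 := sampleMeasure P0 n with hμ0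
  set μ1 := sampleMeasure P1 n with hμ1
  set R : (Fin n → ℕ) → ℝ := fun ω => ∏ i, r (ω i) with hR
  have hR0 : ∀ ω, 0 ≤ R ω := fun ω => Finset.prod_nonneg fun i _ => hr0 _
  have hRb : ∀ ω, R ω ≤ 2 ^ n := fun ω => by
    have := Finset.prod_le_prod (s := (Finset.univ : Finset (Fin n)))
      (f := fun i => r (ω i)) (g := fun _ => (2 : ℝ)) (fun i _ => hr0 _) (fun i _ => hr2 _)
    simpa using this
  have hRm : Measurable R := Measurable.of_discrete
  have hRi : Integrable R μ0 := by
    refine Integrable.of_bound hRm.aestronglyMeasurable (2 ^ n) (Eventually.of_forall fun ω => ?_)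
    rw [Real.norm_eq_abs, abs_of_nonneg (hR0 ω)]; exact hRb ω
  have hR2i : Integrable (fun ω => R ω ^ 2) μ0 := by
    refine Integrable.of_bound (Measurable.of_discrete).aestronglyMeasurable ((2 ^ n) ^ 2)
      (Eventually.of_forall fun ω => ?_)
    rw [Real.norm_eq_abs, abs_of_nonneg (sq_nonneg _)]
    exact pow_le_pow_left₀ (hR0 ω) (hRb ω) 2
  have hdens : μ1 = μ0.withDensity fun ω => ENNReal.ofReal (R ω) := by
    rw [Measure.ext_iff_singleton]
    intro ω
    rw [withDensity_apply _ (measurableSet_singleton _), Measure.restrict_singleton,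
      lintegral_smul_measure, lintegral_dirac, hμ1, hμ0, sampleMeasure_singleton,
      sampleMeasure_singleton, hR, ENNReal.ofReal_prod_of_nonneg (fun i _ => hr0 _), smul_eq_mul,
      mul_comm, ← Finset.prod_mul_distrib]
    exact Finset.prod_congr rfl fun i _ => hP _
  have hset : ∀ B : Set (Fin n → ℕ), μ1.real B = ∫ ω in B, R ω ∂μ0 := by
    intro B
    rw [Measure.real, hdens, withDensity_apply _ (MeasurableSet.of_discrete),
      integral_eq_lintegral_of_nonneg_ae (Eventually.of_forall hR0) hRm.aestronglyMeasurable]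
  have hR1 : ∫ ω, R ω ∂μ0 = 1 := by
    have := hset Set.univ
    rw [Measure.restrict_univ] at this
    rw [← this]; simp
  have hR2 : ∫ ω, R ω ^ 2 ∂μ0 ≤ 5 / 4 := by
    have h1 : ∀ ω, R ω ^ 2 = ∏ i, (fun j => r j ^ 2) (ω i) := fun ω => by
      simp only [hR, Finset.prod_pow]
    simp only [h1]
    rw [hμ0, sampleMeasure, integral_fintype_prod_eq_pow (fun j => r j ^ 2), hχ]
    simpa using hn
  have hA : MeasurableSet A := MeasurableSet.of_discrete
  have hreal : μ0.real A ≤ μ1.real A + 1 / 4 := by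
    have e0 : μ0.real A = ∫ ω, A.indicator (fun _ => (1 : ℝ)) ω ∂μ0 := by
      rw [integral_indicator hA]; simp
    have e1 : μ1.real A = ∫ ω, A.indicator R ω ∂μ0 := by
      rw [integral_indicator hA, hset]
    have i0 : Integrable (A.indicator (fun _ => (1 : ℝ))) μ0 :=
      (integrable_const _).indicator hA
    have i1 : Integrable (A.indicator R) μ0 := hRi.indicator hA
    have key : ∫ ω, (A.indicator (fun _ => (1 : ℝ)) ω - A.indicator R ω) ∂μ0 ≤
        ∫ ω, ((1 / 2) * R ω ^ 2 - (3 / 2) * R ω + 9 / 8) ∂μ0 := by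
      refine integral_mono (i0.sub i1)
        (((hR2i.const_mul _).sub (hRi.const_mul _)).add (integrable_const _)) fun ω => ?_
      by_cases h : ω ∈ A
      · simp only [h, Set.indicator_of_mem]
        nlinarith [sq_nonneg (R ω - 1 / 2)]
      · simp only [h, not_false_eq_true, Set.indicator_of_notMem]
        nlinarith [sq_nonneg (R ω - 3 / 2)]
    have i2 : Integrable (fun ω => (1 / 2) * R ω ^ 2 - (3 / 2) * R ω) μ0 :=
      (hR2i.const_mul _).sub (hRi.const_mul _)
    rw [integral_sub i0 i1, integral_add i2 (integrable_const _), integral_sub (hR2i.const_mul _) (hRi.const_mul _),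
      integral_const_mul, integral_const_mul, hR1, ← e0, ← e1] at key
    simp at key
    linarith
  have h4 : (1 / 4 : ℝ≥0∞) = ENNReal.ofReal (1 / 4) := by
    rw [ENNReal.ofReal_div_of_pos (by norm_num)]; simp
  rw [← ofReal_measureReal (μ := μ0), ← ofReal_measureReal (μ := μ1), h4,
    ← ENNReal.ofReal_add (by positivity) (by norm_num)]
  exact ENNReal.ofReal_le_ofReal hreal

lemma freq_eq_zero_iff {n : ℕ} (ω : Fin n → ℕ) (j : ℕ) : freq ω j = 0 ↔ ∀ i, ω i ≠ j := by
  simp [freq, Finset.filter_eq_empty_iff]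

lemma unseen_prob (P : PMF ℕ) (n j : ℕ) :
    (sampleMeasure P n).real {ω | freq ω j = 0} = (1 - pReal P j) ^ n := by
  have h : {ω : Fin n → ℕ | freq ω j = 0} = Set.pi Set.univ fun _ => {j}ᶜ := by
    ext ω; simp [freq_eq_zero_iff]
  have h2 : (P.toMeasure).real {j}ᶜ = 1 - pReal P j := by
    rw [probReal_compl_eq_one_sub (measurableSet_singleton j), Measure.real,
      PMF.toMeasure_apply_singleton _ _ (measurableSet_singleton _), pReal]
  rw [h, Measure.real, sampleMeasure, Measure.pi_pi, ENNReal.toReal_prod]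
  simp only [Measure.real] at h2
  simp [h2]

lemma pReal_le_one (P : PMF ℕ) (j : ℕ) : pReal P j ≤ 1 := by
  unfold pReal
  exact ENNReal.toReal_le_of_le_ofReal zero_le_one (by simpa using P.coe_le_one j)

lemma pReal_nonneg (P : PMF ℕ) (j : ℕ) : 0 ≤ pReal P j := ENNReal.toReal_nonneg

lemma seen_prob (P : PMF ℕ) (n j : ℕ) :
    (sampleMeasure P n).real {ω | freq ω j ≠ 0} ≤ n * pReal P j := by
  have h : {ω : Fin n → ℕ | freq ω j ≠ 0} = {ω | freq ω j = 0}ᶜ := rfl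
  rw [h, probReal_compl_eq_one_sub MeasurableSet.of_discrete, unseen_prob]
  have := one_add_mul_le_pow (a := -pReal P j) (by linarith [pReal_le_one P j]) n
  rw [sub_eq_add_neg 1 (pReal P j)]
  linarith

/-! ### Separation of the likelihood ratios -/

/-- Indicator that the symbol `j` is unseen. -/
def un {n : ℕ} (ω : Fin n → ℕ) (j : ℕ) : ℝ := if freq ω j = 0 then 1 else 0

lemma un_nonneg {n : ℕ} (ω : Fin n → ℕ) (j : ℕ) : 0 ≤ un ω j := by
  unfold un; split_ifs <;> norm_num

lemma un_le_one {n : ℕ} (ω : Fin n → ℕ) (j : ℕ) : un ω j ≤ 1 := by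
  unfold un; split_ifs <;> norm_num

lemma summable_pow_un {p : ℕ → ℝ} (hp0 : ∀ j, 0 ≤ p j) (hp1 : ∀ j, p j ≤ 1) (hs : Summable p)
    {n : ℕ} (ω : Fin n → ℕ) {r : ℕ} (hr : 1 ≤ r) : Summable fun j => p j ^ r * un ω j := by
  refine Summable.of_nonneg_of_le (fun j => mul_nonneg (pow_nonneg (hp0 j) r) (un_nonneg ω j))
    (fun j => ?_) hs
  calc p j ^ r * un ω j ≤ p j ^ r * 1 := by
        have := pow_nonneg (hp0 j) r
        gcongr
        exact un_le_one ω j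
    _ ≤ p j ^ 1 := by rw [mul_one]; exact pow_le_pow_of_le_one (hp0 j) (hp1 j) hr
    _ = p j := pow_one _

lemma missingMass_split {p : ℕ → ℝ} (hp0 : ∀ j, 0 ≤ p j) (hp1 : ∀ j, p j ≤ 1) (hs : Summable p)
    {n : ℕ} (ω : Fin n → ℕ) {r : ℕ} (hr : 1 ≤ r) (J : ℕ) :
    missingMass p r ω = ∑ j ∈ Finset.range J, p j ^ r * un ω j +
      ∑' i : ℕ, p (i + J) ^ r * un ω (i + J) := by
  rw [(summable_pow_un hp0 hp1 hs ω hr).sum_add_tsum_nat_add J]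
  rfl

lemma separation_alg {A1 A2 S1 S2 δ : ℝ} (hA1 : 0 ≤ A1) (hA2 : 0 ≤ A2) (hS : 0 < S2)
    (hδ : 0 ≤ δ) (hS12 : S2 ≤ S1) (hA : 3 * A2 ≤ S2) :
    0 < (A1 + S1) / (A2 + S2) ∧
      0 < (A1 + (1 + δ) ^ 1 * S1) / (A2 + (1 + δ) ^ 2 * S2) ∧
      (A1 + (1 + δ) ^ 1 * S1) / (A2 + (1 + δ) ^ 2 * S2) * (1 + 3 / 2 * δ) ≤
        (A1 + S1) / (A2 + S2) * (1 + δ) := by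
  have hS1 : 0 < S1 := by linarith
  refine ⟨by positivity, by positivity, ?_⟩
  rw [div_mul_eq_mul_div _ _ (1 + 3 / 2 * δ), div_mul_eq_mul_div _ _ (1 + δ),
    div_le_div_iff₀ (by positivity) (by positivity)]
  have e1 : (A1 + (1 + δ) ^ 1 * S1) ≤ (1 + δ) * (A1 + S1) := by nlinarith
  have e2 : (1 + 3 / 2 * δ) * (A2 + S2) ≤ A2 + (1 + δ) ^ 2 * S2 := by
    nlinarith [mul_nonneg (mul_nonneg hδ hδ) hS.le]
  calc (A1 + (1 + δ) ^ 1 * S1) * (1 + 3 / 2 * δ) * (A2 + S2)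
      = (A1 + (1 + δ) ^ 1 * S1) * ((1 + 3 / 2 * δ) * (A2 + S2)) := by ring
    _ ≤ ((1 + δ) * (A1 + S1)) * (A2 + (1 + δ) ^ 2 * S2) := by gcongr
    _ = (A1 + S1) * (1 + δ) * (A2 + (1 + δ) ^ 2 * S2) := by ring

lemma separation {p p' : ℕ → ℝ} (hp0 : ∀ j, 0 ≤ p j) (hp1 : ∀ j, p j ≤ 1) (hs : Summable p)
    (hp0' : ∀ j, 0 ≤ p' j) (hp1' : ∀ j, p' j ≤ 1) (hs' : Summable p')
    {J : ℕ} {δ : ℝ} (hδ : 0 ≤ δ)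
    (hlow : ∀ j, 1 ≤ j → j < J → p' j = p j) (hhigh : ∀ j, J ≤ j → p' j = (1 + δ) * p j)
    {n : ℕ} (ω : Fin n → ℕ) (h0 : freq ω 0 ≠ 0)
    (hA : 3 * ∑ j ∈ Finset.range J, p j ^ 2 * un ω j ≤ ∑' i : ℕ, p (i + J) ^ 2 * un ω (i + J))
    (hS : 0 < ∑' i : ℕ, p (i + J) ^ 2 * un ω (i + J)) :
    0 < likelihoodRatio p ω ∧ 0 < likelihoodRatio p' ω ∧
      likelihoodRatio p' ω * (1 + 3 / 2 * δ) ≤ likelihoodRatio p ω * (1 + δ) := by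
  have hmm : ∀ r, 1 ≤ r → missingMass p' r ω = ∑ j ∈ Finset.range J, p j ^ r * un ω j +
      (1 + δ) ^ r * ∑' i : ℕ, p (i + J) ^ r * un ω (i + J) := by
    intro r hr
    rw [missingMass_split hp0' hp1' hs' ω hr J, ← tsum_mul_left]
    congr 1
    · refine Finset.sum_congr rfl fun j hj => ?_
      rcases Nat.eq_zero_or_pos j with rfl | hj0
      · simp [un, h0]
      · rw [hlow j hj0 (Finset.mem_range.1 hj)]
    · refine tsum_congr fun i => ?_
      rw [hhigh (i + J) (by omega), mul_pow]; ring
  unfold likelihoodRatio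
  rw [hmm 1 le_rfl, hmm 2 (by norm_num), missingMass_split hp0 hp1 hs ω le_rfl J,
    missingMass_split hp0 hp1 hs ω (by norm_num : 1 ≤ 2) J]
  have hA1 : 0 ≤ ∑ j ∈ Finset.range J, p j ^ 1 * un ω j :=
    Finset.sum_nonneg fun j _ => mul_nonneg (pow_nonneg (hp0 j) 1) (un_nonneg ω j)
  have hA2 : 0 ≤ ∑ j ∈ Finset.range J, p j ^ 2 * un ω j :=
    Finset.sum_nonneg fun j _ => mul_nonneg (pow_nonneg (hp0 j) 2) (un_nonneg ω j)
  have hS12 : ∑' i : ℕ, p (i + J) ^ 2 * un ω (i + J) ≤ ∑' i : ℕ, p (i + J) ^ 1 * un ω (i + J) := by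
    refine Summable.tsum_le_tsum (fun i => ?_)
      ((summable_nat_add_iff (f := fun j => p j ^ 2 * un ω j) J).2
        (summable_pow_un hp0 hp1 hs ω (by norm_num : 1 ≤ 2)))
      ((summable_nat_add_iff (f := fun j => p j ^ 1 * un ω j) J).2
        (summable_pow_un hp0 hp1 hs ω le_rfl))
    exact mul_le_mul_of_nonneg_right (pow_le_pow_of_le_one (hp0 _) (hp1 _) (by norm_num))
      (un_nonneg ω _)
  exact separation_alg hA1 hA2 hS hδ hS12 hA

lemma separation_contra {t T0 T1 δ ε : ℝ} (h0 : 0 < T0) (h1 : 0 < T1) (hδ : 0 < δ)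
    (hδ1 : δ < 1 / 5) (hε : ε ≤ δ / 5) (hT : T1 * (1 + 3 / 2 * δ) ≤ T0 * (1 + δ))
    (e0 : |t / T0 - 1| ≤ ε) (e1 : |t / T1 - 1| ≤ ε) : False := by
  rw [abs_le] at e0 e1
  -- the loss is small for both, hence the estimate is near both values
  have a0 : t ≤ (1 + ε) * T0 := by
    rw [← div_le_iff₀ h0]; linarith
  have b0 : (1 - ε) * T0 ≤ t := by
    rw [← le_div_iff₀ h0]; linarith
  have a1 : t ≤ (1 + ε) * T1 := by
    rw [← div_le_iff₀ h1]; linarith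
  have c1 : (1 - δ / 5) * T0 ≤ (1 + δ / 5) * T1 := by nlinarith
  nlinarith [mul_pos h0 hδ, mul_pos h1 hδ, mul_pos (mul_pos h1 hδ) hδ]

/-- The good event has probability at least `3/4`. -/
lemma good_event (P : PMF ℕ) {n J J' : ℕ} (hn : 4 ≤ n) (hJ : 1 ≤ J) (hJJ : J ≤ J')
    (h0 : 1 / 2 ≤ pReal P 0) (hs : Summable (pReal P)) {Q : ℝ}
    (hQ : Q = ∑' i : ℕ, pReal P (i + J') ^ 2) (hQ0 : 0 < Q)
    (hb : ∀ j, J' ≤ j → n * pReal P j ≤ 1 / 16)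
    (hA : ∑ j ∈ Finset.Ico 1 J, pReal P j ^ 2 * (1 - pReal P j) ^ n ≤ Q / 96) :
    ∃ G : Set (Fin n → ℕ), 3 / 4 ≤ (sampleMeasure P n).real G ∧ ∀ ω ∈ G, freq ω 0 ≠ 0 ∧
      3 * ∑ j ∈ Finset.range J, pReal P j ^ 2 * un ω j ≤
        ∑' i : ℕ, pReal P (i + J) ^ 2 * un ω (i + J) ∧
      0 < ∑' i : ℕ, pReal P (i + J) ^ 2 * un ω (i + J) := by
  set p := pReal P with hp
  have hp0 : ∀ j, 0 ≤ p j := pReal_nonneg P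
  have hp1 : ∀ j, p j ≤ 1 := pReal_le_one P
  set μ := sampleMeasure P n
  have hIntg : ∀ f : (Fin n → ℕ) → ℝ, (∀ ω, 0 ≤ f ω) → ∀ B, (∀ ω, f ω ≤ B) → Integrable f μ := by
    intro f hf B hB
    refine Integrable.of_bound (Measurable.of_discrete).aestronglyMeasurable B
      (Eventually.of_forall fun ω => ?_)
    rw [Real.norm_eq_abs, abs_of_nonneg (hf ω)]; exact hB ω
  have hun : ∀ j, ∫ ω, un ω j ∂μ = (1 - p j) ^ n := by
    intro j
    have : (fun ω : Fin n → ℕ => un ω j) = {ω | freq ω j = 0}.indicator (fun _ => (1 : ℝ)) := by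
      ext ω; simp [un, Set.indicator_apply]
    rw [this, integral_indicator MeasurableSet.of_discrete]
    simp [← unseen_prob P n j, μ, hp]
  have huni : ∀ j, Integrable (fun ω => un ω j) μ := fun j =>
    hIntg _ (fun ω => un_nonneg ω j) 1 (fun ω => un_le_one ω j)
  have hs2 : Summable fun i : ℕ => p (i + J') ^ 2 := by
    refine Summable.of_nonneg_of_le (fun i => by positivity) (fun i => ?_)
      ((summable_nat_add_iff J').2 hs)
    nlinarith [hp0 (i + J'), hp1 (i + J')]
  have hterm0 : ∀ (i : ℕ) (ω : Fin n → ℕ), 0 ≤ p (i + J') ^ 2 * (1 - un ω (i + J')) :=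
    fun i ω => mul_nonneg (by positivity) (by linarith [un_le_one ω (i + J')])
  have hterm1 : ∀ (i : ℕ) (ω : Fin n → ℕ),
      p (i + J') ^ 2 * (1 - un ω (i + J')) ≤ p (i + J') ^ 2 := fun i ω => by
    have := mul_nonneg (sq_nonneg (p (i + J'))) (un_nonneg ω (i + J'))
    linarith
  have hterms : ∀ ω : Fin n → ℕ, Summable fun i : ℕ => p (i + J') ^ 2 * (1 - un ω (i + J')) :=
    fun ω => Summable.of_nonneg_of_le (fun i => hterm0 i ω) (fun i => hterm1 i ω) hs2
  set Z : (Fin n → ℕ) → ℝ := fun ω => ∑' i : ℕ, p (i + J') ^ 2 * (1 - un ω (i + J')) with hZ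
  set A : (Fin n → ℕ) → ℝ := fun ω => ∑ j ∈ Finset.Ico 1 J, p j ^ 2 * un ω j with hAdef
  have hZ0 : ∀ ω, 0 ≤ Z ω := fun ω => tsum_nonneg fun i => hterm0 i ω
  have hZ1 : ∀ ω, Z ω ≤ Q := fun ω => by
    rw [hQ]; exact (hterms ω).tsum_le_tsum (fun i => hterm1 i ω) hs2
  have hA0 : ∀ ω, 0 ≤ A ω := fun ω => Finset.sum_nonneg fun j _ =>
    mul_nonneg (by positivity) (un_nonneg ω j)
  have hZi : Integrable Z μ := hIntg Z hZ0 Q hZ1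
  have hAi : Integrable A μ := integrable_finsetSum _ fun j _ => (huni j).const_mul _
  have htermi : ∀ i : ℕ, ∫ ω, p (i + J') ^ 2 * (1 - un ω (i + J')) ∂μ =
      p (i + J') ^ 2 * (1 - (1 - p (i + J')) ^ n) := fun i => by
    rw [integral_const_mul, integral_sub (integrable_const _) (huni _), hun]
    simp
  have hber : ∀ j, J' ≤ j → 1 - (1 - p j) ^ n ≤ 1 / 16 := fun j hj => by
    have := one_add_mul_le_pow (a := -p j) (by linarith [hp1 j]) n
    have h2 := hb j hj
    rw [sub_eq_add_neg 1 (p j)]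
    linarith
  have hEZ : ∫ ω, Z ω ∂μ ≤ Q / 16 := by
    have hle : ∀ i : ℕ, p (i + J') ^ 2 * (1 - (1 - p (i + J')) ^ n) ≤ p (i + J') ^ 2 * (1 / 16) :=
      fun i => mul_le_mul_of_nonneg_left (hber _ (by omega)) (by positivity)
    have hge : ∀ i : ℕ, 0 ≤ p (i + J') ^ 2 * (1 - (1 - p (i + J')) ^ n) := fun i => by
      have : (1 - p (i + J')) ^ n ≤ 1 := pow_le_one₀ (by linarith [hp1 (i + J')])
        (by linarith [hp0 (i + J')])
      exact mul_nonneg (by positivity) (by linarith)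
    have hsum : Summable fun i : ℕ => p (i + J') ^ 2 * (1 - (1 - p (i + J')) ^ n) :=
      Summable.of_nonneg_of_le hge hle (hs2.mul_right _)
    have h1 : ∑' i : ℕ, ∫ ω, p (i + J') ^ 2 * (1 - un ω (i + J')) ∂μ = ∫ ω, Z ω ∂μ := by
      refine integral_tsum_of_summable_integral_norm
        (fun i => ((integrable_const _).sub (huni _)).const_mul _) ?_
      refine hsum.congr fun i => ?_
      rw [← htermi]
      refine integral_congr_ae (Eventually.of_forall fun ω => ?_)
      simp only [Real.norm_eq_abs]
      rw [abs_of_nonneg (hterm0 i ω)]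
    rw [← h1]
    simp only [htermi]
    calc ∑' i : ℕ, p (i + J') ^ 2 * (1 - (1 - p (i + J')) ^ n)
        ≤ ∑' i : ℕ, p (i + J') ^ 2 * (1 / 16) := hsum.tsum_le_tsum hle (hs2.mul_right _)
      _ = Q / 16 := by rw [tsum_mul_right, ← hQ]; ring
  have hEA : ∫ ω, A ω ∂μ ≤ Q / 96 := by
    rw [hAdef, integral_finsetSum _ (fun j _ => (huni j).const_mul _)]
    simp only [integral_const_mul, hun]
    exact hA
  have hE0 : ∫ ω, un ω 0 ∂μ ≤ 1 / 16 := by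
    rw [hun]
    calc (1 - p 0) ^ n ≤ (1 / 2) ^ n := pow_le_pow_left₀ (by linarith [hp1 0]) (by linarith) n
      _ ≤ (1 / 2) ^ 4 := pow_le_pow_of_le_one (by norm_num) (by norm_num) hn
      _ = 1 / 16 := by norm_num
  set W : (Fin n → ℕ) → ℝ := fun ω => un ω 0 + (2 / Q * Z ω + 6 / Q * A ω) with hW
  have hW0 : ∀ ω, 0 ≤ W ω := fun ω => by
    have h1 := un_nonneg ω 0
    have h2 := hZ0 ω
    have h3 := hA0 ω
    positivity
  have hZAi : Integrable (fun ω => 2 / Q * Z ω + 6 / Q * A ω) μ :=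
    (hZi.const_mul _).add (hAi.const_mul _)
  have hWi : Integrable W μ := (huni 0).add hZAi
  have hEW : ∫ ω, W ω ∂μ ≤ 1 / 4 := by
    rw [hW, integral_add (huni 0) hZAi, integral_add (hZi.const_mul _) (hAi.const_mul _),
      integral_const_mul, integral_const_mul]
    have h1 : 2 / Q * ∫ ω, Z ω ∂μ ≤ 2 / Q * (Q / 16) := by gcongr
    have h2 : 6 / Q * ∫ ω, A ω ∂μ ≤ 6 / Q * (Q / 96) := by gcongr
    have e1 : 2 / Q * (Q / 16) = 1 / 8 := by field_simp; norm_num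
    have e2 : 6 / Q * (Q / 96) = 1 / 16 := by field_simp; norm_num
    linarith
  have hmk := mul_meas_ge_le_integral_of_nonneg (Eventually.of_forall hW0) hWi 1
  refine ⟨{ω | 1 ≤ W ω}ᶜ, ?_, ?_⟩
  · rw [probReal_compl_eq_one_sub MeasurableSet.of_discrete]
    linarith
  · intro ω hω
    have hω1 : W ω < 1 := not_le.1 hω
    have z0 := hZ0 ω
    have a0 := hA0 ω
    have u0 := un_nonneg ω 0
    have zz : 0 ≤ 2 / Q * Z ω := by positivity
    have aa : 0 ≤ 6 / Q * A ω := by positivity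
    simp only [hW] at hω1
    have hf : freq ω 0 ≠ 0 := by
      intro h
      have : un ω 0 = 1 := by simp [un, h]
      linarith
    have hZlt : Z ω < Q / 2 := by
      have : 2 / Q * Z ω < 1 := by linarith
      rw [div_mul_eq_mul_div, div_lt_one hQ0] at this
      linarith
    have hAlt : A ω < Q / 6 := by
      have : 6 / Q * A ω < 1 := by linarith
      rw [div_mul_eq_mul_div, div_lt_one hQ0] at this
      linarith
    have hAeq : ∑ j ∈ Finset.range J, p j ^ 2 * un ω j = A ω := by
      rw [hAdef, Finset.range_eq_Ico, Finset.sum_eq_sum_Ico_succ_bot (by omega)]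
      simp [un, hf]
    have hSlow : Q - Z ω ≤ ∑' i : ℕ, p (i + J) ^ 2 * un ω (i + J) := by
      have hsu := summable_pow_un hp0 hp1 hs ω (by norm_num : 1 ≤ 2)
      have e1 : Q - Z ω = ∑' i : ℕ, p (i + J') ^ 2 * un ω (i + J') := by
        rw [hQ, hZ, ← hs2.tsum_sub (hterms ω)]
        refine tsum_congr fun i => by ring
      have s1 := hsu.sum_add_tsum_nat_add J
      have s2 := hsu.sum_add_tsum_nat_add J'
      have s3 : ∑ j ∈ Finset.range J, p j ^ 2 * un ω j ≤
          ∑ j ∈ Finset.range J', p j ^ 2 * un ω j :=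
        Finset.sum_le_sum_of_subset_of_nonneg (Finset.range_mono hJJ)
          fun j _ _ => mul_nonneg (by positivity) (un_nonneg ω j)
      rw [e1]; linarith
    refine ⟨hf, ?_, by linarith⟩
    rw [hAeq]; linarith

/-! ### The case of small sample sizes -/

/-- The error event. -/
def errSet {n : ℕ} (α C : ℝ) (est : (Fin n → ℕ) → ℝ) (h : ℝ → ℝ) (P : PMF ℕ) (Lα : ℝ) :
    Set (Fin n → ℕ) :=
  {ω | Real.sqrt ((n : ℝ) ^ α * Lα) *
      mloss h (est ω) (likelihoodRatio (pReal P) ω) >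
    Real.sqrt C * min (1 / (8 * Real.sqrt (6 * α))) ((n : ℝ) ^ (α / 2) / 2)}

lemma notMem_errSet {n : ℕ} {α C : ℝ} {est : (Fin n → ℕ) → ℝ} {h : ℝ → ℝ} {P : PMF ℕ}
    {L : ℝ} {ω : Fin n → ℕ} (hn : 1 ≤ n) (hL : 1 ≤ L) (hT : 0 < likelihoodRatio (pReal P) ω)
    (hω : ω ∉ errSet α C est h P L) :
    |est ω / likelihoodRatio (pReal P) ω - 1| ≤
      Real.sqrt C * min (1 / (8 * Real.sqrt (6 * α))) ((n : ℝ) ^ (α / 2) / 2) /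
        Real.sqrt ((n : ℝ) ^ α) := by
  have hn0 : (0 : ℝ) < n := by exact_mod_cast hn
  have hna : 0 < (n : ℝ) ^ α := Real.rpow_pos_of_pos hn0 _
  have h1 : Real.sqrt ((n : ℝ) ^ α * L) * mloss h (est ω) (likelihoodRatio (pReal P) ω) ≤
      Real.sqrt C * min (1 / (8 * Real.sqrt (6 * α))) ((n : ℝ) ^ (α / 2) / 2) := by
    by_contra hc
    exact hω (not_le.1 hc)
  simp only [mloss, hT, if_true] at h1
  rw [le_div_iff₀ (Real.sqrt_pos.2 hna), mul_comm]
  refine le_trans ?_ h1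
  gcongr
  nlinarith

lemma tw_sq_summable {a : ℝ} (ha : 1 < a) {m : ℕ} : Summable fun j => tw a m j ^ 2 := by
  have h1 : ∀ j, tw a m j ≤ 1 := fun j => by
    unfold tw
    split_ifs with h
    · rcases Nat.eq_zero_or_pos j with rfl | hj
      · simp [Real.zero_rpow (by linarith : -a ≠ 0)]
      · exact Real.rpow_le_one_of_one_le_of_nonpos (by exact_mod_cast hj) (by linarith)
    · norm_num
  refine Summable.of_nonneg_of_le (fun i => sq_nonneg _) (fun i => ?_) (tw_summable ha m)
  nlinarith [h1 i, tw_nonneg a m i]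

lemma tw_ratio {a : ℝ} (ha : 1 < a) {m : ℕ} (hm : 1 ≤ m) :
    0 < (∑' j, tw a m j ^ 2) ∧ (m : ℝ) ^ a ≤ tailM a m / ∑' j, tw a m j ^ 2 := by
  have hm0 : (0 : ℝ) < m := by exact_mod_cast hm
  have hpos : 0 < ∑' j, tw a m j ^ 2 := by
    refine (tw_sq_summable ha).tsum_pos (fun j => sq_nonneg _) m ?_
    simp only [tw, le_refl, if_true]
    positivity
  refine ⟨hpos, ?_⟩
  rw [le_div_iff₀ hpos, ← tsum_mul_left]
  refine ((tw_sq_summable ha).mul_left _).tsum_le_tsum (fun j => ?_) (tw_summable ha m)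
  unfold tw
  split_ifs with h
  · have hj0 : (m : ℝ) ≤ j := by exact_mod_cast h
    have h1 : (m : ℝ) ^ a * (j : ℝ) ^ (-a) ≤ 1 := by
      rw [Real.rpow_neg (by linarith), ← div_eq_mul_inv, div_le_one (Real.rpow_pos_of_pos (by linarith) _)]
      exact Real.rpow_le_rpow hm0.le hj0 (by linarith)
    have h2 : (0 : ℝ) ≤ (j : ℝ) ^ (-a) := by positivity
    nlinarith
  · simp

lemma ratio_const {a : ℝ} {m n : ℕ} (hm : 1 ≤ m) (hn : 1 ≤ n) {p : ℕ → ℝ}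
    (hp : ∀ j, p j = fam a m m 0 j) :
    likelihoodRatio p (fun _ : Fin n => 0) = tailM a m / ∑' j, tw a m j ^ 2 := by
  have hun : ∀ j, freq (fun _ : Fin n => 0) j = 0 ↔ j ≠ 0 := by
    intro j
    rw [freq_eq_zero_iff]
    constructor
    · intro h; exact (h ⟨0, hn⟩).symm
    · intro h i; exact h.symm
  have key : ∀ r : ℕ, r ≠ 0 → missingMass p r (fun _ : Fin n => 0) = ∑' j, tw a m j ^ r := by
    intro r hr
    refine tsum_congr fun j => ?_
    simp only [hun]
    by_cases hj : j = 0
    · subst hj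
      have : m ≠ 0 := by omega
      simp [tw, this, hr]
    · simp [hj, hp, fam]
  unfold likelihoodRatio
  rw [key 1 (by norm_num), key 2 (by norm_num)]
  simp [tailM]

lemma const_mass {P : PMF ℕ} {n N : ℕ} (hn : n ≤ N) {x : ℝ} (hx : x ≤ 1 / (2 * ((N : ℝ) + 1)))
    (hP : P 0 = ENNReal.ofReal (1 - x)) :
    (1 / 4 : ℝ≥0∞) ≤ sampleMeasure P n {fun _ => 0} := by
  rw [sampleMeasure_singleton]
  simp only [hP, Finset.prod_const, Finset.card_univ, Fintype.card_fin]
  have hN : (0 : ℝ) < 2 * ((N : ℝ) + 1) := by positivity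
  have hnN : (n : ℝ) ≤ N := by exact_mod_cast hn
  have hx' : x * (2 * ((N : ℝ) + 1)) ≤ 1 := by rwa [le_div_iff₀ hN] at hx
  have hN0 : (0 : ℝ) ≤ N := by positivity
  have hn0 : (0 : ℝ) ≤ n := by positivity
  have hx1 : x ≤ 1 / 2 := by
    by_contra hcon
    push Not at hcon
    nlinarith
  have hnx : n * x ≤ 1 / 2 := by
    rcases le_total x 0 with h | h
    · nlinarith
    · nlinarith
  rw [← ENNReal.ofReal_pow (by linarith)]
  have h4 : (1 / 4 : ℝ≥0∞) = ENNReal.ofReal (1 / 4) := by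
    rw [ENNReal.ofReal_div_of_pos (by norm_num)]; simp
  rw [h4]
  refine ENNReal.ofReal_le_ofReal ?_
  have := one_add_mul_le_pow (a := -x) (by linarith) n
  rw [sub_eq_add_neg]
  linarith

lemma small_case {α β : ℝ} (hα : α ∈ Set.Ioo (0 : ℝ) 1) (hβ : 0 < β) (hβα : β < α / 2) (N : ℕ) :
    ∃ Cab : ℝ, ∀ n : ℕ, 1 ≤ n → n ≤ N → ∀ C : ℝ, 0 < C → C ≤ 1 → ∀ C' : ℝ, Cab < C' →
      ∀ est : (Fin n → ℕ) → ℝ, ∀ h : ℝ → ℝ,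
      (1 / 4 : ℝ≥0∞) ≤ ⨆ (P : PMF ℕ) (Lα : ℝ) (_ : inSigmaClass α β C C' P Lα),
          sampleMeasure P n (errSet α C est h P Lα) := by
  obtain ⟨hα0, hα1⟩ := id hα
  have ha : 1 < 1 / α := by rw [lt_div_iff₀ hα0]; linarith
  set a := 1 / α with hadef
  have hev : ∀ᶠ m in atTop, tailM a m ≤ 1 / (2 * ((N : ℝ) + 1)) :=
    (tailM_tendsto ha).eventually (eventually_le_nhds (by positivity))
  obtain ⟨m0, hm0, hm0'⟩ := (hev.and (eventually_ge_atTop 1)).exists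
  have hgrow : Tendsto (fun m : ℕ => (m : ℝ) ^ a) atTop atTop :=
    (tendsto_rpow_atTop (by linarith)).comp tendsto_natCast_atTop_atTop
  obtain ⟨m1, ⟨hm1, hm1'⟩, hm1''⟩ := ((hev.and (eventually_ge_atTop 1)).and
    (hgrow.eventually_gt_atTop (3 * (tailM a m0 / ∑' j, tw a m0 j ^ 2)))).exists
  refine ⟨max ((m0 : ℝ) + 1) ((m1 : ℝ) + 1), ?_⟩
  intro n hn hnN C hC hC1 C' hC' est h
  have hb : 1 / (2 * ((N : ℝ) + 1)) ≤ 1 := by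
    rw [div_le_one (by positivity)]
    have : (0 : ℝ) ≤ N := by positivity
    linarith
  have build : ∀ m : ℕ, 1 ≤ m → tailM a m ≤ 1 / (2 * ((N : ℝ) + 1)) → (m : ℝ) + 1 < C' →
      ∃ P : PMF ℕ, inSigmaClass α β C C' P 1 ∧
        (1 / 4 : ℝ≥0∞) ≤ sampleMeasure P n {fun _ => 0} ∧
        likelihoodRatio (pReal P) (fun _ : Fin n => 0) = tailM a m / ∑' j, tw a m j ^ 2 := by
    intro m hm hmt hmC
    obtain ⟨P, hP1, hP2⟩ := fam_exists ha (m := m) (J := m) (δ := 0) le_rfl (by linarith)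
    refine ⟨P, ?_, ?_, ratio_const hm hn hP2⟩
    · have := fam_inSigma hα hβ hβα hm (δ := 0) (K := 0) (C := C) (C' := C') le_rfl (by simp) hC1
        (by linarith) hP2
      simpa using this
    · refine const_mass hnN hmt ?_
      rw [hP1, fam_zero hm hm]; simp
  obtain ⟨P0, s0, q0, t0⟩ := build m0 hm0' hm0 (lt_of_le_of_lt (le_max_left _ _) hC')
  obtain ⟨P1, s1, q1, t1⟩ := build m1 hm1' hm1 (lt_of_le_of_lt (le_max_right _ _) hC')
  have hmem : (fun _ => 0) ∈ errSet α C est h P0 1 ∨ (fun _ => 0) ∈ errSet α C est h P1 1 := by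
    by_contra hcon
    push Not at hcon
    obtain ⟨c0, c1⟩ := hcon
    have hT0 : 0 < likelihoodRatio (pReal P0) (fun _ : Fin n => 0) := by
      rw [t0]; exact div_pos (tailM_pos ha hm0') (tw_ratio ha hm0').1
    have hT1 : 0 < likelihoodRatio (pReal P1) (fun _ : Fin n => 0) := by
      rw [t1]; exact div_pos (tailM_pos ha hm1') (tw_ratio ha hm1').1
    have d0 := notMem_errSet hn le_rfl hT0 c0
    have d1 := notMem_errSet hn le_rfl hT1 c1
    have hε : Real.sqrt C * min (1 / (8 * Real.sqrt (6 * α))) ((n : ℝ) ^ (α / 2) / 2) /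
        Real.sqrt ((n : ℝ) ^ α) ≤ 1 / 2 := by
      have hn0 : (0 : ℝ) < n := by exact_mod_cast hn
      have hna : 0 < (n : ℝ) ^ α := Real.rpow_pos_of_pos hn0 _
      have e : (n : ℝ) ^ (α / 2) = Real.sqrt ((n : ℝ) ^ α) := by
        rw [Real.sqrt_eq_rpow, ← Real.rpow_mul hn0.le]; congr 1; ring
      have hs : 0 < Real.sqrt ((n : ℝ) ^ α) := Real.sqrt_pos.2 hna
      rw [div_le_iff₀ hs, e]
      have hC2 : Real.sqrt C ≤ 1 := Real.sqrt_le_one.2 hC1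
      calc Real.sqrt C * min (1 / (8 * Real.sqrt (6 * α))) (Real.sqrt ((n : ℝ) ^ α) / 2)
          ≤ 1 * (Real.sqrt ((n : ℝ) ^ α) / 2) := by
            gcongr
            exact min_le_right _ _
        _ = 1 / 2 * Real.sqrt ((n : ℝ) ^ α) := by ring
    have f0 := (abs_le.1 (d0.trans hε)).2
    have f1 := (abs_le.1 (d1.trans hε)).1
    have g0 : est (fun _ => 0) ≤ 3 / 2 * likelihoodRatio (pReal P0) (fun _ : Fin n => 0) := by
      rw [← div_le_iff₀ hT0]; linarith
    have g1 : 1 / 2 * likelihoodRatio (pReal P1) (fun _ : Fin n => 0) ≤ est (fun _ => 0) := by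
      rw [← le_div_iff₀ hT1]; linarith
    have g2 := (tw_ratio ha hm1').2
    rw [← t1] at g2
    rw [← t0] at hm1''
    linarith
  rcases hmem with hmem | hmem
  · refine le_trans (q0.trans (measure_mono (Set.singleton_subset_iff.2 hmem))) ?_
    exact le_iSup_of_le P0 (le_iSup_of_le 1 (le_iSup_of_le s0 le_rfl))
  · refine le_trans (q1.trans (measure_mono (Set.singleton_subset_iff.2 hmem))) ?_
    exact le_iSup_of_le P1 (le_iSup_of_le 1 (le_iSup_of_le s1 le_rfl))

lemma two_point {α β C C' : ℝ} {n : ℕ} {est : (Fin n → ℕ) → ℝ} {h : ℝ → ℝ} {P0 P1 : PMF ℕ}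
    {L0 L1 : ℝ} (s0 : inSigmaClass α β C C' P0 L0) (s1 : inSigmaClass α β C C' P1 L1)
    (htv : ∀ A, sampleMeasure P0 n A ≤ sampleMeasure P1 n A + 1 / 4)
    {G : Set (Fin n → ℕ)} (hG : 3 / 4 ≤ (sampleMeasure P0 n).real G)
    (hsub : G ⊆ errSet α C est h P0 L0 ∪ errSet α C est h P1 L1) :
    (1 / 4 : ℝ≥0∞) ≤ ⨆ (P : PMF ℕ) (Lα : ℝ) (_ : inSigmaClass α β C C' P Lα),
          sampleMeasure P n (errSet α C est h P Lα) := by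
  by_contra hcon
  push Not at hcon
  have l0 : sampleMeasure P0 n (errSet α C est h P0 L0) < 1 / 4 := by
    refine lt_of_le_of_lt ?_ hcon
    exact le_iSup_of_le P0 (le_iSup_of_le L0 (le_iSup_of_le s0 le_rfl))
  have l1 : sampleMeasure P1 n (errSet α C est h P1 L1) < 1 / 4 := by
    refine lt_of_le_of_lt ?_ hcon
    exact le_iSup_of_le P1 (le_iSup_of_le L1 (le_iSup_of_le s1 le_rfl))
  have h4 : (1 / 4 : ℝ≥0∞) = ENNReal.ofReal (1 / 4) := by
    rw [ENNReal.ofReal_div_of_pos (by norm_num)]; simp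
  have hG' : ENNReal.ofReal (3 / 4) ≤ sampleMeasure P0 n G := by
    rw [← ofReal_measureReal (μ := sampleMeasure P0 n)]
    exact ENNReal.ofReal_le_ofReal hG
  have c1 : sampleMeasure P0 n G ≤ sampleMeasure P0 n (errSet α C est h P0 L0) + (sampleMeasure P1 n (errSet α C est h P1 L1) + 1 / 4) :=
    (measure_mono hsub).trans ((measure_union_le _ _).trans (by gcongr; exact htv (errSet α C est h P1 L1)))
  have c2 : sampleMeasure P0 n (errSet α C est h P0 L0) + (sampleMeasure P1 n (errSet α C est h P1 L1) + 1 / 4) <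
      1 / 4 + (1 / 4 + 1 / 4) :=
    ENNReal.add_lt_add l0 (ENNReal.add_lt_add_right (by simp) l1)
  have c3 : (1 / 4 : ℝ≥0∞) + (1 / 4 + 1 / 4) = ENNReal.ofReal (3 / 4) := by
    rw [h4, ← ENNReal.ofReal_add (by norm_num) (by norm_num),
      ← ENNReal.ofReal_add (by norm_num) (by norm_num)]
    norm_num
  rw [c3] at c2
  exact absurd (hG'.trans c1) (not_le.2 c2)

/-! ### The case of large sample sizes -/

lemma tw_eq_of_le {a : ℝ} {m J j : ℕ} (hmJ : m ≤ J) (hj : J ≤ j) : tw a J j = tw a m j := by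
  simp [tw, hj, hmJ.trans hj]

/-- The two samples are close in total variation. -/
lemma fam_tv {a : ℝ} (ha : 1 < a) {m J : ℕ} (hm : 1 ≤ m) (hmJ : m ≤ J) {δ : ℝ} (hδ : 0 ≤ δ)
    (hδ1 : δ ≤ 1) (hM : tailM a m ≤ 1 / 2) {P0 P1 : PMF ℕ}
    (hP0 : ∀ j, P0 j = ENNReal.ofReal (fam a m J 0 j))
    (hP1 : ∀ j, P1 j = ENNReal.ofReal (fam a m J δ j)) {n : ℕ}
    (hn : n * (2 * δ ^ 2 * tailM a J) ≤ 3 / 16) (A : Set (Fin n → ℕ)) :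
    sampleMeasure P0 n A ≤ sampleMeasure P1 n A + 1 / 4 := by
  have hJ : 1 ≤ J := hm.trans hmJ
  have hJ0 : J ≠ 0 := by omega
  have hm0 : m ≠ 0 := by omega
  set M := tailM a J with hMdef
  set q := 1 - tailM a m with hq
  have hq0 : 1 / 2 ≤ q := by rw [hq]; linarith
  have hqpos : 0 < q := by linarith
  have hM0 : 0 ≤ M := tailM_nonneg a J
  have hMq : M ≤ q := by
    have := tailM_mono ha hmJ
    rw [hq]; linarith
  set r : ℕ → ℝ := fun j => if j = 0 then 1 - δ * M / q else if J ≤ j then 1 + δ else 1 with hr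
  have hδM : δ * M ≤ q := by nlinarith
  have hr00 : 0 ≤ 1 - δ * M / q := by
    have : δ * M / q ≤ 1 := by rw [div_le_one hqpos]; exact hδM
    linarith
  have hr0 : ∀ j, 0 ≤ r j := by
    intro j
    simp only [hr]
    split_ifs
    · exact hr00
    · linarith
    · norm_num
  have hdq : 0 ≤ δ * M / q := by positivity
  have hr2 : ∀ j, r j ≤ 2 := by
    intro j
    simp only [hr]
    split_ifs
    · linarith
    · linarith
    · norm_num
  have hfam : ∀ j, fam a m J δ j = r j * fam a m J 0 j := by
    intro j
    by_cases hj : j = 0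
    · subst hj
      rw [fam_zero hm hJ, fam_zero hm hJ]
      simp only [hr, if_true, zero_mul, add_zero]
      rw [← hq, ← hMdef]
      field_simp
      rw [hq]; ring
    · by_cases hj' : J ≤ j
      · simp [fam, hr, hj, hj', tw_eq_of_le hmJ hj']
        ring
      · simp [fam, hr, hj, hj', tw]
  have hf0 : ∀ j, 0 ≤ fam a m J 0 j := fam_nonneg le_rfl (by linarith)
  have hP : ∀ j, P1 j = ENNReal.ofReal (r j) * P0 j := by
    intro j
    rw [hP1, hP0, hfam, ENNReal.ofReal_mul (hr0 j)]
  set χ := δ ^ 2 * M + δ ^ 2 * M ^ 2 / q with hχ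
  have hpt : ∀ j, fam a m J 0 j * r j ^ 2 = fam a m J 0 j + ((2 * δ + δ ^ 2) * tw a J j +
      if j = 0 then -2 * δ * M + δ ^ 2 * M ^ 2 / q else 0) := by
    intro j
    by_cases hj : j = 0
    · subst hj
      rw [fam_zero hm hJ]
      simp only [hr, if_true, zero_mul, add_zero]
      rw [← hq]
      simp [tw, hJ0]
      field_simp
      ring
    · by_cases hj' : J ≤ j
      · simp [fam, hr, hj, hj', tw_eq_of_le hmJ hj']
        ring
      · simp [fam, hr, hj, hj', tw]
  have hsum : HasSum (fun j => fam a m J 0 j * r j ^ 2) (1 + χ) := by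
    have h1 := fam_hasSum ha m J 0
    have h2 := (tw_summable ha J).hasSum.mul_left (2 * δ + δ ^ 2)
    have h3 := hasSum_ite_eq (0 : ℕ) (-2 * δ * M + δ ^ 2 * M ^ 2 / q)
    have h4 := h1.add (h2.add h3)
    have e : 1 + ((2 * δ + δ ^ 2) * ∑' b, tw a J b + (-2 * δ * M + δ ^ 2 * M ^ 2 / q)) = 1 + χ := by
      have : ∑' b, tw a J b = M := rfl
      rw [this, hχ]; ring
    rw [e] at h4
    exact h4.congr_fun hpt
  have hIntg : ∫ j, r j ^ 2 ∂P0.toMeasure = 1 + χ := by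
    rw [PMF.integral_eq_tsum]
    · rw [← hsum.tsum_eq]
      refine tsum_congr fun j => ?_
      rw [hP0, ENNReal.toReal_ofReal (hf0 j), smul_eq_mul]
    · refine Integrable.of_bound (C := 4) (Measurable.of_discrete).aestronglyMeasurable ?_
      refine Eventually.of_forall fun j => ?_
      rw [Real.norm_eq_abs, abs_of_nonneg (sq_nonneg _)]
      nlinarith [hr0 j, hr2 j]
  have hχ0 : 0 ≤ χ := by positivity
  have hχ2 : χ ≤ 2 * δ ^ 2 * M := by
    have : δ ^ 2 * M ^ 2 / q ≤ δ ^ 2 * M := by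
      rw [div_le_iff₀ hqpos]
      have : 0 ≤ δ ^ 2 * M := by positivity
      nlinarith
    rw [hχ]; linarith
  refine tv_bound hr0 hr2 hP hIntg ?_ A
  have hnχ : n * χ ≤ 3 / 16 := le_trans (by gcongr) hn
  have e1 : (1 + χ) ^ n ≤ Real.exp (n * χ) := by
    rw [Real.exp_nat_mul]
    refine pow_le_pow_left₀ (by linarith) ?_ _
    linarith [Real.add_one_le_exp χ]
  have e2 : Real.exp (n * χ) ≤ Real.exp (3 / 16) := Real.exp_le_exp.2 hnχ
  have e3 : 1 - (3 / 16 : ℝ) ≤ Real.exp (-(3 / 16)) := Real.one_sub_le_exp_neg _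
  have e4 : Real.exp (3 / 16) * Real.exp (-(3 / 16)) = 1 := by rw [← Real.exp_add]; simp
  have e5 : 0 < Real.exp (3 / 16) := Real.exp_pos _
  nlinarith

lemma tail_sq_lower {α : ℝ} (hα : α ∈ Set.Ioo (0 : ℝ) 1) {n J J' : ℕ} (hn : 1 ≤ n) (hJ : 1 ≤ J)
    (hJJ : J ≤ J') (hJ' : (J' : ℝ) ^ (1 / α) ≤ 32 * n) :
    α * J / (2048 * (n : ℝ) ^ 2) ≤ ∑' i : ℕ, (((i + J' : ℕ) : ℝ) ^ (-(1 / α))) ^ 2 := by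
  obtain ⟨h0, h1⟩ := hα
  have ha : 1 < 1 / α := by rw [lt_div_iff₀ h0]; linarith
  have hJ'1 : 1 ≤ J' := hJ.trans hJJ
  have hn0 : (0 : ℝ) < n := by exact_mod_cast hn
  have hJ'0 : (0 : ℝ) < J' := by exact_mod_cast hJ'1
  have hJ0 : (0 : ℝ) < J := by exact_mod_cast hJ
  have hJJ0 : (J : ℝ) ≤ J' := by exact_mod_cast hJJ
  have h2a : 1 < 2 * (1 / α) := by linarith
  have key := aux_tail_lower h2a hJ'1
  have e : ∀ i : ℕ, (((i + J' : ℕ) : ℝ) ^ (-(1 / α))) ^ 2 = ((i + J' : ℕ) : ℝ) ^ (-(2 * (1 / α))) := by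
    intro i
    rw [← Real.rpow_natCast, ← Real.rpow_mul (by positivity)]
    congr 1
    push_cast
    ring
  simp only [e]
  refine le_trans ?_ key
  set x := (J' : ℝ) ^ (1 / α) with hx
  have hx0 : 0 < x := by positivity
  have e2 : (J' : ℝ) ^ (1 - 2 * (1 / α)) = J' / x ^ 2 := by
    rw [Real.rpow_sub hJ'0, Real.rpow_one, mul_comm 2, Real.rpow_mul hJ'0.le]
    norm_num [hx]
  rw [e2]
  have e3 : 2 * (1 / α) - 1 ≤ 2 / α := by
    have : 2 * (1 / α) = 2 / α := by ring
    linarith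
  calc α * J / (2048 * (n : ℝ) ^ 2) = J / (32 * n) ^ 2 / (2 / α) := by
        field_simp; ring
    _ ≤ J' / x ^ 2 / (2 * (1 / α) - 1) := by
        gcongr

lemma head_upper {α : ℝ} (hα : α ∈ Set.Ioo (0 : ℝ) 1) {n J m : ℕ} (hn : 1 ≤ n) (hJ : 1 ≤ J)
    (hJn : (J : ℝ) ^ (1 / α) ≤ n / 32) {p : ℕ → ℝ} (hp1 : ∀ j, p j ≤ 1)
    (hp : ∀ j, 1 ≤ j → p j = tw (1 / α) m j) :
    ∑ j ∈ Finset.Ico 1 J, p j ^ 2 * (1 - p j) ^ n ≤ α * J / (2048 * (n : ℝ) ^ 2) / 96 := by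
  obtain ⟨h0, h1⟩ := hα
  have ha : 1 < 1 / α := by rw [lt_div_iff₀ h0]; linarith
  set a := 1 / α with hadef
  have hn0 : (0 : ℝ) < n := by exact_mod_cast hn
  have hJ0 : (1 : ℝ) ≤ J := by exact_mod_cast hJ
  have hterm : ∀ j ∈ Finset.Ico 1 J, p j ^ 2 * (1 - p j) ^ n ≤
      3628800 / (n : ℝ) ^ 10 * (j : ℝ) ^ (8 * a) := by
    intro j hj
    have hj1 : 1 ≤ j := (Finset.mem_Ico.1 hj).1
    have hj0 : (0 : ℝ) < j := by exact_mod_cast hj1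
    by_cases hmj : m ≤ j
    · have hpj : p j = ((j : ℝ) ^ a)⁻¹ := by
        rw [hp j hj1]; simp [tw, hmj, Real.rpow_neg hj0.le]
      have e8 : (j : ℝ) ^ (8 * a) = ((j : ℝ) ^ a) ^ 8 := by
        rw [mul_comm, Real.rpow_mul hj0.le]; norm_num
      set x := (j : ℝ) ^ a with hx
      have hx0 : 0 < x := by positivity
      have hp1j := hp1 j
      rw [hpj] at hp1j ⊢
      have f1 : (1 - x⁻¹) ^ n ≤ Real.exp (-(n * x⁻¹)) := by
        rw [show -((n : ℝ) * x⁻¹) = n * (-x⁻¹) by ring, Real.exp_nat_mul]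
        exact pow_le_pow_left₀ (by linarith) (Real.one_sub_le_exp_neg _) _
      have f2 : (n * x⁻¹) ^ 10 / (Nat.factorial 10 : ℕ) ≤ Real.exp (n * x⁻¹) :=
        Real.pow_div_factorial_le_exp _ (by positivity) 10
      have f3 : ((Nat.factorial 10 : ℕ) : ℝ) = 3628800 := by norm_num [Nat.factorial]
      rw [f3] at f2
      have f4 : Real.exp (-(n * x⁻¹)) ≤ 3628800 / (n * x⁻¹) ^ 10 := by
        rw [Real.exp_neg]
        refine le_trans (inv_anti₀ (by positivity) f2) ?_
        rw [inv_div]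
      calc x⁻¹ ^ 2 * (1 - x⁻¹) ^ n ≤ x⁻¹ ^ 2 * (3628800 / (n * x⁻¹) ^ 10) := by
            gcongr
            exact f1.trans f4
        _ = 3628800 / (n : ℝ) ^ 10 * x ^ 8 := by field_simp
        _ = _ := by rw [e8]
    · have : p j = 0 := by rw [hp j hj1]; simp [tw, hmj]
      rw [this]
      simp only [ne_eq, OfNat.ofNat_ne_zero, not_false_eq_true, zero_pow, zero_mul]
      positivity
  have hs := aux_sum_pow_le (c := 8 * a) (by linarith) J
  have hsub : ∑ j ∈ Finset.Ico 1 J, (j : ℝ) ^ (8 * a) ≤ ∑ j ∈ Finset.range J, (j : ℝ) ^ (8 * a) := by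
    refine Finset.sum_le_sum_of_subset_of_nonneg (fun j hj => ?_) (fun j _ _ => by positivity)
    exact Finset.mem_range.2 (Finset.mem_Ico.1 hj).2
  have hpow : ((J : ℝ) ^ (8 * a + 1) + 1) / (8 * a + 1) ≤ 2 * (J * (n / 32) ^ 8) / (8 * a) := by
    have e8 : (J : ℝ) ^ (8 * a + 1) = J * ((J : ℝ) ^ a) ^ 8 := by
      rw [Real.rpow_add (by linarith), Real.rpow_one, mul_comm 8 a, Real.rpow_mul (by linarith)]
      norm_num
      ring
    have hge : (1 : ℝ) ≤ (J : ℝ) ^ (8 * a + 1) := Real.one_le_rpow hJ0 (by linarith)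
    have hle : (J : ℝ) ^ (8 * a + 1) ≤ J * (n / 32) ^ 8 := by
      rw [e8]; gcongr
    gcongr
    · linarith
    · linarith
  calc ∑ j ∈ Finset.Ico 1 J, p j ^ 2 * (1 - p j) ^ n
      ≤ ∑ j ∈ Finset.Ico 1 J, 3628800 / (n : ℝ) ^ 10 * (j : ℝ) ^ (8 * a) :=
        Finset.sum_le_sum hterm
    _ = 3628800 / (n : ℝ) ^ 10 * ∑ j ∈ Finset.Ico 1 J, (j : ℝ) ^ (8 * a) := by
        rw [Finset.mul_sum]
    _ ≤ 3628800 / (n : ℝ) ^ 10 * (2 * (J * (n / 32) ^ 8) / (8 * a)) := by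
        gcongr
        exact hsub.trans (hs.trans hpow)
    _ = (α * J / (n : ℝ) ^ 2) * (3628800 * 2 / (8 * 32 ^ 8)) := by
        rw [hadef]; field_simp
    _ ≤ (α * J / (n : ℝ) ^ 2) * (1 / (2048 * 96)) := by
        refine mul_le_mul_of_nonneg_left (by norm_num) (by positivity)
    _ = _ := by field_simp

/-- The choice of the cut-off points. -/
lemma cutoffs {α : ℝ} (hα : α ∈ Set.Ioo (0 : ℝ) 1) (m : ℕ) (R : ℝ) :
    ∀ᶠ n : ℕ in atTop, ∃ J J' : ℕ, m ≤ J ∧ R ≤ J ∧ J ≤ J' ∧ (J : ℝ) ≤ (n : ℝ) ^ α ∧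
      (J : ℝ) ^ (1 / α) ≤ n / 32 ∧ n ≤ 48 * (J : ℝ) ^ (1 / α) ∧
      16 * n ≤ (J' : ℝ) ^ (1 / α) ∧ (J' : ℝ) ^ (1 / α) ≤ 32 * n := by
  obtain ⟨h0, h1⟩ := hα
  have hinv : ∀ x : ℝ, 0 ≤ x → (x ^ α) ^ (1 / α) = x := by
    intro x hx
    rw [← Real.rpow_mul hx, mul_one_div_cancel h0.ne', Real.rpow_one]
  have hy : Tendsto (fun n : ℕ => ((n : ℝ) / 32) ^ α) atTop atTop :=
    (tendsto_rpow_atTop h0).comp (tendsto_natCast_atTop_atTop.atTop_div_const (by norm_num))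
  have hz : Tendsto (fun n : ℕ => (16 * (n : ℝ)) ^ α) atTop atTop :=
    (tendsto_rpow_atTop h0).comp (tendsto_natCast_atTop_atTop.const_mul_atTop (by norm_num))
  have hfl : Tendsto (fun n : ℕ => (⌊((n : ℝ) / 32) ^ α⌋₊ : ℝ) / ((n : ℝ) / 32) ^ α) atTop (nhds 1) :=
    (tendsto_nat_floor_div_atTop (R := ℝ)).comp hy
  have hce : Tendsto (fun n : ℕ => (⌈(16 * (n : ℝ)) ^ α⌉₊ : ℝ) / (16 * (n : ℝ)) ^ α) atTop (nhds 1) :=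
    (tendsto_nat_ceil_div_atTop (R := ℝ)).comp hz
  have hfl2 : Tendsto (fun n : ℕ => ⌊((n : ℝ) / 32) ^ α⌋₊) atTop atTop :=
    tendsto_nat_floor_atTop.comp hy
  have c1 : ((2 : ℝ) / 3) ^ α < 1 := Real.rpow_lt_one (by norm_num) (by norm_num) h0
  have c2 : (1 : ℝ) < (2 : ℝ) ^ α := Real.one_lt_rpow (by norm_num) h0
  filter_upwards [hfl.eventually (lt_mem_nhds c1), hce.eventually (gt_mem_nhds c2),
    hfl2.eventually_ge_atTop m, hfl2.eventually_ge_atTop ⌈R⌉₊, eventually_ge_atTop 1]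
    with n e1 e2 e3 e4 e5
  have hn0 : (0 : ℝ) < n := by exact_mod_cast e5
  have hy0 : 0 < ((n : ℝ) / 32) ^ α := by positivity
  have hz0 : 0 < (16 * (n : ℝ)) ^ α := by positivity
  have hJy : (⌊((n : ℝ) / 32) ^ α⌋₊ : ℝ) ≤ ((n : ℝ) / 32) ^ α := Nat.floor_le hy0.le
  have hJz : (16 * (n : ℝ)) ^ α ≤ (⌈(16 * (n : ℝ)) ^ α⌉₊ : ℝ) := Nat.le_ceil _
  rw [lt_div_iff₀ hy0, ← Real.mul_rpow (by norm_num) (by positivity)] at e1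
  rw [div_lt_iff₀ hz0, ← Real.mul_rpow (by norm_num) (by positivity)] at e2
  have hpos : (0 : ℝ) ≤ 1 / α := by positivity
  have hyn : ((n : ℝ) / 32) ^ α ≤ (n : ℝ) ^ α := by
    refine Real.rpow_le_rpow (by positivity) (by linarith) h0.le
  have hnz : (n : ℝ) ^ α ≤ (16 * (n : ℝ)) ^ α := by
    refine Real.rpow_le_rpow (by positivity) (by linarith) h0.le
  refine ⟨⌊((n : ℝ) / 32) ^ α⌋₊, ⌈(16 * (n : ℝ)) ^ α⌉₊, e3, ?_, ?_, hJy.trans hyn, ?_, ?_, ?_, ?_⟩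
  · exact (Nat.le_ceil R).trans (by exact_mod_cast e4)
  · have : (⌊((n : ℝ) / 32) ^ α⌋₊ : ℝ) ≤ (⌈(16 * (n : ℝ)) ^ α⌉₊ : ℝ) :=
      hJy.trans (hyn.trans (hnz.trans hJz))
    exact_mod_cast this
  · have := Real.rpow_le_rpow (by positivity) hJy hpos
    rwa [hinv _ (by positivity)] at this
  · have := Real.rpow_le_rpow (by positivity) e1.le hpos
    rw [hinv _ (by positivity)] at this
    linarith
  · have := Real.rpow_le_rpow (by positivity) hJz hpos
    rwa [hinv _ (by positivity)] at this
  · have := Real.rpow_le_rpow (by positivity) e2.le hpos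
    rw [hinv _ (by positivity)] at this
    linarith

lemma large_case {α β : ℝ} (hα : α ∈ Set.Ioo (0 : ℝ) 1) (hβ : 0 < β) (hβα : β < α / 2) :
    ∃ (N : ℕ) (Cab : ℝ), ∀ n : ℕ, N ≤ n → ∀ C : ℝ, 0 < C → C ≤ (1 - α) / 96 →
      ∀ C' : ℝ, Cab < C' → ∀ est : (Fin n → ℕ) → ℝ, ∀ h : ℝ → ℝ,
      (1 / 4 : ℝ≥0∞) ≤ ⨆ (P : PMF ℕ) (Lα : ℝ) (_ : inSigmaClass α β C C' P Lα),
          sampleMeasure P n (errSet α C est h P Lα) := by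
  obtain ⟨hα0, hα1⟩ := id hα
  have ha : 1 < 1 / α := by rw [lt_div_iff₀ hα0]; linarith
  obtain ⟨m, hmM, hm⟩ := (((tailM_tendsto ha).eventually
    (eventually_le_nhds (by norm_num : (0 : ℝ) < 1 / 2))).and (eventually_ge_atTop 1)).exists
  set X := (1 - α) / (1024 * α) with hX
  have h1α : 0 < 1 - α := by linarith
  have hX0 : 0 < X := by positivity
  have hnα : Tendsto (fun n : ℕ => (n : ℝ) ^ α) atTop atTop :=
    (tendsto_rpow_atTop hα0).comp tendsto_natCast_atTop_atTop
  obtain ⟨N, hN⟩ := eventually_atTop.1 (((cutoffs hα m ((1 - α) / α)).and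
    (hnα.eventually_gt_atTop (25 * X))).and (eventually_ge_atTop 4))
  refine ⟨N, (m : ℝ) + 1 + √X, ?_⟩
  intro n hNn C hC hCα C' hC' est h
  obtain ⟨⟨⟨J, J', hmJ, hRJ, hJJ, hJn, hJ1, hJ2, hJ3, hJ4⟩, hnX⟩, hn4⟩ := hN n hNn
  have hJ : 1 ≤ J := hm.trans hmJ
  have hn1 : 1 ≤ n := by omega
  have hn0 : (0 : ℝ) < n := by exact_mod_cast hn1
  have hJ0 : (0 : ℝ) < J := by exact_mod_cast hJ
  have hJ0' : (0 : ℝ) < J' := by exact_mod_cast hJ.trans hJJ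
  set y := (n : ℝ) ^ α with hy
  have hy0 : 0 < y := by positivity
  set δ := √(X / y) with hδdef
  have hδ : 0 < δ := Real.sqrt_pos.2 (by positivity)
  have hδsq : δ ^ 2 = X / y := Real.sq_sqrt (by positivity)
  have hδ5 : δ < 1 / 5 := by
    rw [hδdef, Real.sqrt_lt' (by norm_num), div_lt_iff₀ hy0]
    linarith
  have hMJ : tailM (1 / α) J ≤ 1 / 2 := (tailM_mono ha hmJ).trans hmM
  have hMJ0 := tailM_nonneg (1 / α) J
  obtain ⟨P0, hP0, hp0⟩ := fam_exists ha (m := m) (J := J) (δ := 0) le_rfl (by linarith)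
  obtain ⟨P1, hP1, hp1⟩ := fam_exists ha (m := m) (J := J) (δ := δ) hδ.le (by nlinarith)
  have hC1 : C ≤ 1 := by
    refine hCα.trans ?_
    rw [div_le_one (by norm_num)]; linarith
  have s0 : inSigmaClass α β C C' P0 ((1 + 0) ^ α) :=
    fam_inSigma hα hβ hβα hm (K := √X) le_rfl (by simp) hC1 hC'.le hp0
  have s1 : inSigmaClass α β C C' P1 ((1 + δ) ^ α) := by
    refine fam_inSigma hα hβ hβα hm (K := √X) hδ.le ?_ hC1 hC'.le hp1
    rw [hδdef, ← Real.sqrt_mul (by positivity)]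
    refine Real.sqrt_le_sqrt ?_
    rw [div_mul_eq_mul_div, div_le_iff₀ hy0]
    gcongr
  have htv : ∀ A, sampleMeasure P0 n A ≤ sampleMeasure P1 n A + 1 / 4 := by
    refine fam_tv ha hm hmJ hδ.le (by linarith) hmM hP0 hP1 ?_
    have hup := aux_tail_upper ha hJ
    rw [← tailM_eq ha] at hup
    set z := (J : ℝ) ^ (1 / α) with hz
    have hz0 : 0 < z := by positivity
    have e1 : (J : ℝ) ^ (-(1 / α)) = 1 / z := by
      rw [Real.rpow_neg hJ0.le, ← hz, inv_eq_one_div]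
    have e2 : (J : ℝ) ^ (1 - 1 / α) = J / z := by
      rw [Real.rpow_sub hJ0, Real.rpow_one]
    have e3 : 1 / α - 1 = (1 - α) / α := by field_simp
    rw [e1, e2, e3] at hup
    have e4 : (1 : ℝ) ≤ J * (α / (1 - α)) := by
      rw [div_le_iff₀ hα0] at hRJ
      rw [mul_div_assoc', le_div_iff₀ h1α]; linarith
    have e5 : tailM (1 / α) J ≤ 2 * (J * (α / (1 - α))) / z := by
      refine hup.trans ?_
      have : (J : ℝ) / z / ((1 - α) / α) = (J * (α / (1 - α))) / z := by field_simp
      rw [this, ← add_div]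
      gcongr
      linarith
    have e6 : n * tailM (1 / α) J ≤ 96 * (J * (α / (1 - α))) := by
      calc n * tailM (1 / α) J ≤ (48 * z) * (2 * (J * (α / (1 - α))) / z) := by gcongr
        _ = _ := by field_simp; norm_num
    calc n * (2 * δ ^ 2 * tailM (1 / α) J) = 2 * (X / y) * (n * tailM (1 / α) J) := by
          rw [hδsq]; ring
      _ ≤ 2 * (X / y) * (96 * (J * (α / (1 - α)))) := by gcongr
      _ = 3 / 16 * (J / y) := by rw [hX]; field_simp; norm_num
      _ ≤ 3 / 16 * 1 := by
          gcongr
          rw [div_le_one hy0]; exact hJn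
      _ = 3 / 16 := by norm_num
  have hptail : ∀ j, 1 ≤ j → pReal P0 j = tw (1 / α) m j := by
    intro j hj
    have : j ≠ 0 := by omega
    rw [hp0]; simp [fam, this]
  have hpJ' : ∀ j, J' ≤ j → pReal P0 j = (j : ℝ) ^ (-(1 / α)) := by
    intro j hj
    rw [hptail j (by omega)]
    simp [tw, show m ≤ j by omega]
  have hs0 : Summable (pReal P0) := by
    rw [show pReal P0 = fam (1 / α) m J 0 from funext hp0]
    exact (fam_hasSum ha m J 0).summable
  have hs1 : Summable (pReal P1) := by
    rw [show pReal P1 = fam (1 / α) m J δ from funext hp1]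
    exact (fam_hasSum ha m J δ).summable
  have hQ : α * J / (2048 * (n : ℝ) ^ 2) ≤ ∑' i : ℕ, pReal P0 (i + J') ^ 2 := by
    have := tail_sq_lower hα hn1 hJ hJJ hJ4
    refine this.trans (le_of_eq (tsum_congr fun i => ?_))
    rw [hpJ' _ (by omega)]
  obtain ⟨G, hG, hGω⟩ := good_event P0 hn4 hJ hJJ (by
      rw [hp0, fam_zero hm hJ]; linarith) hs0 rfl
    (lt_of_lt_of_le (by positivity) hQ) (by
      intro j hj
      rw [hpJ' j hj]
      have hjj : (J' : ℝ) ≤ j := by exact_mod_cast hj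
      have h1 : (16 : ℝ) * n ≤ (j : ℝ) ^ (1 / α) :=
        hJ3.trans (Real.rpow_le_rpow hJ0'.le hjj (by positivity))
      rw [Real.rpow_neg (by positivity), ← div_eq_mul_inv, div_le_iff₀ (by linarith)]
      linarith) (by
      have := head_upper hα hn1 hJ hJ1 (pReal_le_one P0) hptail
      refine this.trans ?_
      gcongr)
  have hε : √C * min (1 / (8 * √(6 * α))) ((n : ℝ) ^ (α / 2) / 2) / √y ≤ δ / 5 := by
    have h1 : √C * min (1 / (8 * √(6 * α))) ((n : ℝ) ^ (α / 2) / 2) ≤ √C * (1 / (8 * √(6 * α))) := by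
      gcongr
      exact min_le_left _ _
    have h2 : √C * (1 / (8 * √(6 * α))) ≤ √X / 5 := by
      have h3 : √C * 5 ≤ √X * (8 * √(6 * α)) := by
        have e5 : (5 : ℝ) = √25 := by
          rw [show (25 : ℝ) = 5 ^ 2 by norm_num, Real.sqrt_sq (by norm_num)]
        have e8 : (8 : ℝ) = √64 := by
          rw [show (64 : ℝ) = 8 ^ 2 by norm_num, Real.sqrt_sq (by norm_num)]
        rw [e5, e8, ← Real.sqrt_mul hC.le, ← Real.sqrt_mul (by norm_num : (0 : ℝ) ≤ 64),
          ← Real.sqrt_mul hX0.le]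
        refine Real.sqrt_le_sqrt ?_
        have : X * (64 * (6 * α)) = 3 / 8 * (1 - α) := by rw [hX]; field_simp; norm_num
        rw [this]
        linarith
      have h6 : 0 < √(6 * α) := Real.sqrt_pos.2 (by positivity)
      rw [mul_one_div, div_le_div_iff₀ (by positivity) (by norm_num)]
      exact h3
    rw [hδdef, Real.sqrt_div hX0.le, div_right_comm]
    gcongr
    exact h1.trans h2
  have hL : (1 : ℝ) ≤ (1 + δ) ^ α := Real.one_le_rpow (by linarith) hα0.le
  refine two_point s0 s1 htv hG ?_
  intro ω hω
  obtain ⟨g0, g1, g2⟩ := hGω ω hω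
  by_contra hcon
  rw [Set.mem_union, not_or] at hcon
  obtain ⟨c0, c1⟩ := hcon
  obtain ⟨t0, t1, t2⟩ := separation (p := pReal P0) (p' := pReal P1) (J := J) (pReal_nonneg P0)
    (pReal_le_one P0) hs0 (pReal_nonneg P1) (pReal_le_one P1) hs1 hδ.le
    (by
      intro j hj1 hjJ
      have : j ≠ 0 := by omega
      rw [hp0, hp1]; simp [fam, this, tw, show ¬ J ≤ j by omega])
    (by
      intro j hj
      have : j ≠ 0 := by omega
      rw [hp0, hp1]; simp [fam, this, tw_eq_of_le hmJ hj]
      ring) ω g0 g1 g2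
  exact separation_contra t0 t1 hδ hδ5 hε t2
    (notMem_errSet hn1 (by simp) t0 c0) (notMem_errSet hn1 hL t1 c1)

/-- Minimax lower bound, over the second-order regularly varying class `Σ(α,β,C,C')`, for the
estimation of the likelihood ratio of the rare-type match problem. -/
theorem likelihoodRatio_minimax_lower_bound
    (α β : ℝ) (hα : α ∈ Set.Ioo (0 : ℝ) 1) (hβ : 0 < β) (hβα : β < α / 2) :
    ∃ Cab : ℝ, ∀ n : ℕ, max 4 ((12 * α) ^ (1 / (1 - α))) ≤ (n : ℝ) →
      ∀ C : ℝ, 0 < C → C ≤ 1 / (64 * Real.pi * Real.Gamma (1 - α)) →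
      ∀ C' : ℝ, Cab < C' →
      ∀ est : (Fin n → ℕ) → ℝ, Measurable est →
      ∀ h : ℝ → ℝ, Measurable h →
      (1 / 4 : ℝ≥0∞) ≤
        ⨆ (P : PMF ℕ) (Lα : ℝ) (_ : inSigmaClass α β C C' P Lα),
          sampleMeasure P n
            {ω | Real.sqrt ((n : ℝ) ^ α * Lα) *
                  mloss h (est ω) (likelihoodRatio (pReal P) ω) >
                Real.sqrt C * min (1 / (8 * Real.sqrt (6 * α))) ((n : ℝ) ^ (α / 2) / 2)} := by
  obtain ⟨N, C1, hlarge⟩ := large_case hα hβ hβα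
  obtain ⟨C2, hsmall⟩ := small_case hα hβ hβα N
  refine ⟨max C1 C2, ?_⟩
  intro n hn C hC hCG C' hC' est _ h _
  have hn4 : (4 : ℝ) ≤ n := (le_max_left _ _).trans hn
  have hn4' : 4 ≤ n := by exact_mod_cast hn4
  have h1α : 0 < 1 - α := by linarith [hα.2]
  have hCα : C ≤ (1 - α) / 96 := by
    refine hCG.trans ?_
    have hG := aux_Gamma_lower hα
    have hpi := Real.pi_gt_three
    have hG0 : 0 < 1 / (2 * (1 - α)) := by positivity
    calc 1 / (64 * Real.pi * Real.Gamma (1 - α)) ≤ 1 / (64 * 3 * (1 / (2 * (1 - α)))) := by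
          gcongr
      _ = (1 - α) / 96 := by field_simp; norm_num
  have hC1 : C ≤ 1 := by
    refine hCα.trans ?_
    rw [div_le_one (by norm_num)]
    linarith [hα.1]
  rcases le_total N n with hNn | hNn
  · exact hlarge n hNn C hC hCα C' (lt_of_le_of_lt (le_max_left _ _) hC') est h
  · exact hsmall n (by omega) hNn C hC hC1 C' (lt_of_le_of_lt (le_max_right _ _) hC') est h

end
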